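/- arXiv:1003.2699 — 3 statements merged into one kernel-verified Lean document; each statement's English description precedes it below -/
import Mathlib

section
/- (Bottom layer j = 0) Assume the integrality condition on (μ,ν) and let ϑ, φ ∈ (0,π) with cos ϑ + cos φ > 0. Then ∫₀^∞ K_{ν/2}(x) J_{μ/2}(x sin ϑ/(cos ϑ + cos φ)) J_{ν/2}(x sin φ/(cos ϑ + cos φ)) x^{(μ+2)/2} dx = (2^{(ν−2)/2} Γ((μ−ν+2)/2)/√π) · (cos ϑ + cos φ) · (sin ϑ)^{μ/2} (sin φ)^{ν/2} · C̃_{(μ−ν)/2}^{(ν+1)/2}(cos φ). -/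
open MeasureTheory Real Filter Set Metric

noncomputable section

/-- Normalized Bessel function of the first kind: `J̃_α(x) = (x/2)^{-α} J_α(x)`,
given by its (entire) power series. -/
def besselJt (α x : ℝ) : ℝ :=
  ∑' m : ℕ, (-1) ^ m / (m.factorial * Real.Gamma (m + α + 1)) * (x / 2) ^ (2 * m)

/-- Bessel function of the first kind `J_α`. -/
def besselJ (α x : ℝ) : ℝ :=
  ∑' m : ℕ, (-1) ^ m / (m.factorial * Real.Gamma (m + α + 1)) * (x / 2) ^ (2 * (m : ℝ) + α)

/-- Normalized modified Bessel function `Ĩ_α(x) = (x/2)^{-α} I_α(x)`,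
given by its (entire, even) power series. -/
def besselIt (α x : ℝ) : ℝ :=
  ∑' m : ℕ, (x / 2) ^ (2 * m) / (m.factorial * Real.Gamma (m + α + 1))

/-- Modified Bessel function of the first kind `I_α`. -/
def besselI (α x : ℝ) : ℝ :=
  ∑' m : ℕ, (x / 2) ^ (2 * (m : ℝ) + α) / (m.factorial * Real.Gamma (m + α + 1))

/-- Modified Bessel function of the second kind,
`K_α(x) = lim_{β→α} (π/2)(I_{−β}(x) − I_β(x))/sin(βπ)`. -/
def besselK (α x : ℝ) : ℝ :=
  limUnder (nhdsWithin α {α}ᶜ) fun β =>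
    Real.pi / 2 * (besselI (-β) x - besselI β x) / Real.sin (β * Real.pi)

/-- Normalized K-Bessel function `K̃_α(x) = (x/2)^{-α} K_α(x)`. -/
def besselKt (α x : ℝ) : ℝ := (x / 2) ^ (-α) * besselK α x

/-- Normalized Gegenbauer polynomial `C̃_n^λ = Γ(λ) C_n^λ`, where `C_n^λ` is defined via the
generating function `(1 − 2xt + t²)^{−λ} = Σ_{n≥0} C_n^λ(x) tⁿ`; explicitly,
`C̃_n^λ(x) = Σ_{k=0}^{⌊n/2⌋} (−1)^k Γ(λ+n−k)/(k!(n−2k)!) (2x)^{n−2k}`.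
This expression also gives the limit value `C̃_n^0 = lim_{λ→0+} Γ(λ) C_n^λ` for `n ≥ 1`. -/
def gegenbauerCt (n : ℕ) (l x : ℝ) : ℝ :=
  ∑ k ∈ Finset.range (n / 2 + 1),
    (-1) ^ k * Real.Gamma (l + n - k) / (k.factorial * (n - 2 * k).factorial)
      * (2 * x) ^ (n - 2 * k)

/-- Laguerre polynomial `L_n^μ(x) = Σ_{k=0}^n (−1)^k binom(n+μ, n−k) x^k/k!`
(with nonnegative integer parameter `μ`). -/
def laguerreL (n μ : ℕ) (x : ℝ) : ℝ :=
  ∑ k ∈ Finset.range (n + 1),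
    (-1) ^ k * (Nat.choose (n + μ) (n - k)) * x ^ k / k.factorial

/-- The Euler operator `θ = x d/dx`. -/
def eulerOp (u : ℝ → ℝ) : ℝ → ℝ := fun x => x * deriv u x

/-- `(θ+c)(θ+c+ν)u − x² u`, i.e. the operator `Q_ν(θ+c)` applied to `u`. -/
def besselQ (ν c : ℝ) (u : ℝ → ℝ) : ℝ → ℝ := fun x =>
  eulerOp (fun y => eulerOp u y + (c + ν) * u y) x
    + c * (eulerOp u x + (c + ν) * u x) - x ^ 2 * u x

/-- The fourth order differential operator
`D_{μ,ν} = x^{−2}((θ+μ)(θ+μ+ν) − x²)(θ(θ+ν) − x²)`. -/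
def Dop (μ ν : ℝ) (u : ℝ → ℝ) : ℝ → ℝ := fun x =>
  besselQ ν μ (besselQ ν 0 u) x / x ^ 2

/-- The generating function
`G^{μ,ν}(t,x) = (1−t)^{−(μ+ν+2)/2} Ĩ_{μ/2}(tx/(1−t)) K̃_{ν/2}(x/(1−t))`. -/
def genFun (μ ν t x : ℝ) : ℝ :=
  (1 - t) ^ (-(μ + ν + 2) / 2) * besselIt (μ / 2) (t * x / (1 - t))
    * besselKt (ν / 2) (x / (1 - t))

/-- The eigenfunctions `Λ_j^{μ,ν}`, defined as the Taylor coefficients in `t` at `t = 0` of the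
generating function `G^{μ,ν}(t,x) = Σ_{j≥0} Λ_j^{μ,ν}(x) t^j`. -/
def LambdaF (μ ν : ℝ) (j : ℕ) (x : ℝ) : ℝ :=
  iteratedDeriv j (fun t => genFun μ ν t x) 0 / j.factorial

/-- The integrality condition: `μ ≥ ν ≥ −1` are integers of the same parity,
not both equal to `−1`. -/
def IntCond (μ ν : ℤ) : Prop :=
  -1 ≤ ν ∧ ν ≤ μ ∧ Even (μ - ν) ∧ ¬(μ = -1 ∧ ν = -1)

end


/-- Entire series `Σ w^m/(m! Γ(m+α+1))`. -/
noncomputable def It (α w : ℝ) : ℝ := ∑' m : ℕ, w ^ m / (m.factorial * Real.Gamma (m + α + 1))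

lemma HasSum.congr_fun' {f g : ℕ → ℝ} {a : ℝ} (h : HasSum g a) (hfg : ∀ m, f m = g m) :
    HasSum f a := by
  rw [funext hfg]; exact h

lemma inv_Gamma_rec (x : ℝ) : (Real.Gamma x)⁻¹ = x * (Real.Gamma (x + 1))⁻¹ := by
  by_cases hx : x = 0
  · subst hx; simp [Real.Gamma_zero]
  · rw [Real.Gamma_add_one hx, mul_inv, ← mul_assoc, mul_inv_cancel₀ hx, one_mul]

lemma inv_Gamma_bdd (α : ℝ) : ∃ B : ℝ, ∀ m : ℕ, |(Real.Gamma (m + α + 1))⁻¹| ≤ B := by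
  obtain ⟨N, hN⟩ := exists_nat_ge (1 - α)
  have h1 : ∀ m : ℕ, N ≤ m → |(Real.Gamma (m + α + 1))⁻¹| ≤ 1 := by
    intro m hm
    have hm' : (N : ℝ) ≤ m := by exact_mod_cast hm
    have h2 : (2:ℝ) ≤ m + α + 1 := by linarith
    have := Real.Gamma_strictMonoOn_Ici.monotoneOn (a := 2) (b := m + α + 1) (by simp) h2 h2
    rw [Real.Gamma_two] at this
    rw [abs_of_nonneg (by positivity)]
    exact inv_le_one_of_one_le₀ this
  refine ⟨1 + ∑ m ∈ Finset.range N, |(Real.Gamma (m + α + 1))⁻¹|, fun m => ?_⟩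
  by_cases hm : N ≤ m
  · have := h1 m hm
    have h3 : 0 ≤ ∑ m ∈ Finset.range N, |(Real.Gamma (m + α + 1))⁻¹| :=
      Finset.sum_nonneg fun _ _ => abs_nonneg _
    linarith
  · have := Finset.single_le_sum (f := fun m : ℕ => |(Real.Gamma (m + α + 1))⁻¹|)
      (fun _ _ => abs_nonneg _) (Finset.mem_range.2 (not_le.1 hm))
    linarith

lemma It_term_bound (α : ℝ) : ∃ B : ℝ, ∀ (m : ℕ) (w R : ℝ), |w| ≤ R →
    ‖w ^ m / (m.factorial * Real.Gamma (m + α + 1))‖ ≤ B * (R ^ m / m.factorial) := by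
  obtain ⟨B, hB⟩ := inv_Gamma_bdd α
  refine ⟨B, fun m w R hw => ?_⟩
  have : w ^ m / (m.factorial * Real.Gamma (m + α + 1))
      = (Real.Gamma (m + α + 1))⁻¹ * (w ^ m / m.factorial) := by
    rw [div_mul_eq_div_div, div_eq_mul_inv, mul_comm]
  rw [this, norm_mul, Real.norm_eq_abs]
  have h0 : 0 ≤ B := (abs_nonneg _).trans (hB 0)
  have h2 : ‖w ^ m / (m.factorial : ℝ)‖ ≤ R ^ m / m.factorial := by
    rw [norm_div, norm_pow, Real.norm_eq_abs, Real.norm_natCast]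
    gcongr
  exact mul_le_mul (hB m) h2 (norm_nonneg _) h0

lemma It_summable_norm (α w : ℝ) :
    Summable fun m : ℕ => ‖w ^ m / (m.factorial * Real.Gamma (m + α + 1))‖ := by
  obtain ⟨B, hB⟩ := It_term_bound α
  exact Summable.of_nonneg_of_le (fun _ => norm_nonneg _) (fun m => hB m w |w| le_rfl)
    ((Real.summable_pow_div_factorial |w|).mul_left B)

lemma It_summable (α w : ℝ) :
    Summable fun m : ℕ => w ^ m / (m.factorial * Real.Gamma (m + α + 1)) :=
  (It_summable_norm α w).of_norm

lemma It_hasSum (α w : ℝ) :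
    HasSum (fun m : ℕ => w ^ m / (m.factorial * Real.Gamma (m + α + 1))) (It α w) :=
  (It_summable α w).hasSum

lemma It_shift_summable (α w : ℝ) :
    HasSum (fun m : ℕ => m * w ^ (m - 1) / (m.factorial * Real.Gamma (m + α + 1)))
      (It (α + 1) w) := by
  have := It_hasSum (α + 1) w
  refine (hasSum_nat_add_iff' 1).1 ?_
  simp only [Finset.range_one, Finset.sum_singleton, Nat.cast_zero, zero_mul, zero_div, sub_zero]
  refine HasSum.congr_fun' this fun m => ?_
  rw [Nat.factorial_succ]
  have h : ((m:ℝ) + 1) ≠ 0 := by positivity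
  have h2 : (m.factorial : ℝ) ≠ 0 := by positivity
  push_cast
  rw [show (m:ℝ) + 1 + α + 1 = m + (α + 1) + 1 by ring]
  rw [mul_assoc, mul_div_mul_left _ _ h]

lemma It_hasDerivAt (α w : ℝ) : HasDerivAt (It α) (It (α + 1) w) w := by
  obtain ⟨B, hB⟩ := It_term_bound (α + 1)
  set R := |w| + 1
  have hw : w ∈ Metric.ball (0:ℝ) R := by simp [R]
  have hu : Summable fun m : ℕ => (B * (R ^ (m-1) / (m-1).factorial)) := by
    refine (summable_nat_add_iff 1).1 ?_
    simpa using (Real.summable_pow_div_factorial R).mul_left B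
  have hBnn : 0 ≤ B := by
    have := (norm_nonneg _).trans (hB 0 0 1 (by simp))
    simpa using this
  have hR : 0 ≤ R := by positivity
  have := hasDerivAt_tsum_of_isPreconnected (g := fun (m:ℕ) (w:ℝ) =>
      w ^ m / (m.factorial * Real.Gamma (m + α + 1)))
    (g' := fun (m:ℕ) (w:ℝ) => m * w ^ (m-1) / (m.factorial * Real.Gamma (m + α + 1)))
    hu Metric.isOpen_ball (convex_ball (0:ℝ) R).isPreconnected
    (fun m y _ => (hasDerivAt_pow m y).div_const _) (fun m y hy => ?_) hw (It_summable α w) hw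
  · rw [(It_shift_summable α w).tsum_eq] at this
    exact this
  · rcases m with _ | m
    · simp; exact hBnn
    · simp only [Nat.add_sub_cancel]
      have hy' : |y| ≤ R := by
        have := mem_ball_zero_iff.1 hy
        simpa using this.le
      refine le_trans (le_of_eq ?_) (hB m y R hy')
      congr 1
      have h : ((m:ℝ) + 1) ≠ 0 := by positivity
      rw [Nat.factorial_succ]
      push_cast
      rw [show (m:ℝ) + 1 + α + 1 = m + (α + 1) + 1 by ring, mul_assoc, mul_div_mul_left _ _ h]

lemma It_continuous (α : ℝ) : Continuous (It α) :=
  continuous_iff_continuousAt.2 fun w => (It_hasDerivAt α w).continuousAt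

lemma It_zero (α : ℝ) : It α 0 = (Real.Gamma (α + 1))⁻¹ := by
  unfold It
  rw [tsum_eq_single 0 (fun m hm => by simp [hm])]
  simp

lemma It_rec (α w : ℝ) : It α w = (α + 1) * It (α + 1) w + w * It (α + 2) w := by
  have h1 := ((It_hasSum (α + 1) w).mul_left (α + 1)).add
    ((It_shift_summable (α + 1) w).mul_left w)
  rw [show α + 1 + 1 = α + 2 by ring] at h1
  refine (It_hasSum α w).unique ?_
  refine HasSum.congr_fun' h1 fun m => ?_
  have h := inv_Gamma_rec (m + α + 1)
  simp only [div_eq_mul_inv, mul_inv]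
  rw [h, show (m:ℝ) + α + 1 + 1 = m + (α + 1) + 1 by ring]
  rcases m with _ | m
  · simp
  · simp only [Nat.add_sub_cancel, pow_succ]
    push_cast
    ring

/-- `g α z = It α (-z)`, so that `J_α(y) = (y/2)^α g α (y²/4)`. -/
noncomputable def gB (α z : ℝ) : ℝ := It α (-z)

lemma gB_hasDerivAt (α z : ℝ) : HasDerivAt (gB α) (-gB (α + 1) z) z := by
  have := (It_hasDerivAt α (-z)).comp z (hasDerivAt_neg z)
  refine this.congr_deriv ?_
  simp [gB]

lemma gB_continuous (α : ℝ) : Continuous (gB α) := (It_continuous α).comp continuous_neg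

lemma gB_rec (α z : ℝ) : gB α z = (α + 1) * gB (α + 1) z - z * gB (α + 2) z := by
  unfold gB; rw [It_rec]; ring

lemma gB_energy (α z : ℝ) : HasDerivAt (fun z => gB α z ^ 2 + z * gB (α + 1) z ^ 2)
    (-(2 * α + 1) * gB (α + 1) z ^ 2) z := by
  have h1 := (gB_hasDerivAt α z).pow 2
  have h2 := (hasDerivAt_id z).mul ((gB_hasDerivAt (α + 1) z).pow 2)
  have h3 := h1.add h2
  refine (h3.congr_deriv ?_).congr_of_eventuallyEq ?_
  · rw [gB_rec α z]
    simp
    rw [show α + 1 + 1 = α + 2 by ring]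
    ring
  · exact Eventually.of_forall fun z => by simp

lemma gB_bound (α z : ℝ) (hα : -1/2 ≤ α) (hz : 0 ≤ z) : |gB α z| ≤ (Real.Gamma (α + 1))⁻¹ := by
  have hG : 0 < Real.Gamma (α + 1) := Real.Gamma_pos_of_pos (by linarith)
  have hanti : AntitoneOn (fun z => gB α z ^ 2 + z * gB (α + 1) z ^ 2) (Ici 0) := by
    apply antitoneOn_of_deriv_nonpos (convex_Ici 0)
    · exact fun z _ => (gB_energy α z).continuousAt.continuousWithinAt
    · exact fun z _ => (gB_energy α z).differentiableAt.differentiableWithinAt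
    · intro z _
      rw [(gB_energy α z).deriv]
      nlinarith [sq_nonneg (gB (α + 1) z)]
  have := hanti (a := 0) (b := z) (by simp) hz hz
  have h0 : gB α 0 = (Real.Gamma (α + 1))⁻¹ := by simp [gB, It_zero]
  simp only [h0, zero_mul, add_zero] at this
  have h5 : gB α z ^ 2 ≤ (Real.Gamma (α + 1))⁻¹ ^ 2 := by
    nlinarith [mul_nonneg hz (sq_nonneg (gB (α + 1) z))]
  exact abs_le_of_sq_le_sq h5 (by positivity)

lemma besselJ_eq (α y : ℝ) (hy : 0 < y) : besselJ α y = (y / 2) ^ α * gB α (y ^ 2 / 4) := by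
  unfold besselJ gB It
  rw [← tsum_mul_left]
  congr 1; ext m
  rw [Real.rpow_add (by positivity), show (2 * (m:ℝ)) = ((2 * m : ℕ) : ℝ) by push_cast; ring,
    Real.rpow_natCast, pow_mul, neg_pow (y ^ 2 / 4), show (y / 2) ^ 2 = y ^ 2 / 4 by ring]
  ring

lemma besselI_eq (α y : ℝ) (hy : 0 < y) : besselI α y = (y / 2) ^ α * It α (y ^ 2 / 4) := by
  unfold besselI It
  rw [← tsum_mul_left]
  congr 1; ext m
  rw [Real.rpow_add (by positivity), show (2 * (m:ℝ)) = ((2 * m : ℕ) : ℝ) by push_cast; ring,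
    Real.rpow_natCast, pow_mul, show (y / 2) ^ 2 = y ^ 2 / 4 by ring]
  ring


/-- Kernel `exp(-t - z/t) t^{β-1}`. -/
noncomputable def kern (β z t : ℝ) : ℝ := Real.exp (-t - z / t) * t ^ (β - 1)

/-- `h_β(z) = ∫₀^∞ exp(-t - z/t) t^{β-1} dt`. -/
noncomputable def hK (β z : ℝ) : ℝ := ∫ t in Ioi (0:ℝ), kern β z t

lemma kern_nonneg (β z t : ℝ) (ht : 0 < t) : 0 ≤ kern β z t := by
  unfold kern; positivity

lemma kern_meas (β z : ℝ) (μ : Measure ℝ) : AEStronglyMeasurable (kern β z) μ := by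
  have : Measurable (kern β z) := by unfold kern; fun_prop
  exact this.aestronglyMeasurable

lemma kern_anti (β z z' t : ℝ) (ht : 0 < t) (h : z ≤ z') : kern β z' t ≤ kern β z t := by
  unfold kern
  gcongr

lemma kern_zero (β t : ℝ) : kern β 0 t = Real.exp (-t) * t ^ (β - 1) := by
  simp [kern]

lemma kern_le (β z t : ℝ) (k : ℕ) (hz : 0 < z) (ht : 0 < t) :
    kern β z t ≤ (k.factorial / z ^ k) * (Real.exp (-t) * t ^ (β + k - 1)) := by
  have h1 := Real.pow_div_factorial_le_exp (z / t) (by positivity) k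
  unfold kern
  rw [sub_eq_add_neg, Real.exp_add, show β + (k:ℝ) - 1 = (β - 1) + k by ring,
    Real.rpow_add ht, Real.rpow_natCast, Real.exp_neg (z / t)]
  have h2 : (Real.exp (z / t))⁻¹ ≤ k.factorial * t ^ k / z ^ k := by
    rw [inv_le_comm₀ (by positivity) (by positivity)]
    refine le_trans (le_of_eq ?_) h1
    rw [div_pow, inv_div, div_div, mul_comm (t ^ k)]
  have h3 : 0 ≤ Real.exp (-t) * t ^ (β - 1) := by positivity
  calc _ = (Real.exp (-t) * t ^ (β - 1)) * (Real.exp (z / t))⁻¹ := by ring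
    _ ≤ (Real.exp (-t) * t ^ (β - 1)) * (k.factorial * t ^ k / z ^ k) := by gcongr
    _ = _ := by ring

lemma kern_integrable (β z : ℝ) (hz : 0 < z) : IntegrableOn (kern β z) (Ioi 0) := by
  obtain ⟨k, hk⟩ := exists_nat_gt (-β)
  have h := (Real.GammaIntegral_convergent (s := β + k) (by linarith)).const_mul
    (k.factorial / z ^ k)
  refine Integrable.mono' h (kern_meas _ _ _) ?_
  filter_upwards [ae_restrict_mem measurableSet_Ioi] with t ht
  rw [Real.norm_of_nonneg (kern_nonneg _ _ _ ht)]
  exact kern_le β z t k hz ht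

lemma hK_hasDerivAt (β z : ℝ) (hz : 0 < z) : HasDerivAt (hK β) (-hK (β - 1) z) z := by
  have := hasDerivAt_integral_of_dominated_loc_of_deriv_le (μ := volume.restrict (Ioi (0:ℝ)))
    (F := kern β) (F' := fun z t => - kern (β - 1) z t) (x₀ := z) (s := Ioi (z / 2))
    (bound := kern (β - 1) (z / 2)) (Ioi_mem_nhds (by linarith))
    (Eventually.of_forall fun z => kern_meas _ _ _) (kern_integrable β z hz)
    (kern_meas _ _ _).neg ?_ (kern_integrable _ _ (by linarith)) ?_
  · have h := this.2
    rw [integral_neg] at h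
    exact h
  · filter_upwards [ae_restrict_mem measurableSet_Ioi] with t ht y hy
    rw [norm_neg, Real.norm_of_nonneg (kern_nonneg _ _ _ ht)]
    exact kern_anti _ _ _ _ ht (le_of_lt hy)
  · filter_upwards [ae_restrict_mem measurableSet_Ioi] with t ht y hy
    have ht0 : (0:ℝ) < t := ht
    have h1 : HasDerivAt (fun y : ℝ => -t - y / t) (-(1 / t)) y := by
      simpa using ((hasDerivAt_id y).div_const t).const_sub (-t)
    refine (h1.exp.mul_const (t ^ (β - 1))).congr_deriv ?_
    unfold kern
    rw [Real.rpow_sub ht0 (β - 1) 1, Real.rpow_one]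
    ring

lemma hK_continuousOn (β : ℝ) : ContinuousOn (hK β) (Ioi 0) :=
  fun z hz => (hK_hasDerivAt β z hz).continuousAt.continuousWithinAt

lemma hK_nonneg (β z : ℝ) : 0 ≤ hK β z :=
  setIntegral_nonneg measurableSet_Ioi fun _ ht => kern_nonneg _ _ _ ht

lemma hK_tendsto (β : ℝ) (hβ : 0 < β) :
    Tendsto (hK β) (nhdsWithin 0 (Ioi 0)) (nhds (Real.Gamma β)) := by
  rw [Real.Gamma_eq_integral hβ]
  refine tendsto_integral_filter_of_dominated_convergence (fun t => Real.exp (-t) * t ^ (β - 1))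
    (Eventually.of_forall fun z => kern_meas _ _ _) ?_ (Real.GammaIntegral_convergent hβ) ?_
  · filter_upwards [self_mem_nhdsWithin] with z hz
    filter_upwards [ae_restrict_mem measurableSet_Ioi] with t ht
    rw [Real.norm_of_nonneg (kern_nonneg _ _ _ ht), ← kern_zero]
    exact kern_anti _ _ _ _ ht (le_of_lt hz)
  · filter_upwards with t
    rw [← kern_zero]
    have : Continuous fun z => kern β z t := by unfold kern; fun_prop
    exact (this.tendsto 0).mono_left nhdsWithin_le_nhds

lemma hK_neg (β z : ℝ) (hz : 0 < z) : hK (-β) z = z ^ (-β) * hK β z := by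
  unfold hK
  rw [← integral_comp_rpow_Ioi (kern (-β) z) (p := -1) (by norm_num)]
  have h := integral_comp_mul_left_Ioi (fun x => Real.exp (-(1 / x) - z * x) * x ^ (β - 1)) 0
    (inv_pos.2 hz)
  rw [mul_zero, inv_inv, smul_eq_mul] at h
  have h1 : ∫ x in Ioi (0:ℝ), Real.exp (-(1 / (z⁻¹ * x)) - z * (z⁻¹ * x)) * (z⁻¹ * x) ^ (β - 1)
      = z ^ (1 - β) * ∫ t in Ioi (0:ℝ), kern β z t := by
    rw [← integral_const_mul]
    refine setIntegral_congr_fun measurableSet_Ioi fun x hx => ?_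
    have hx0 : (0:ℝ) < x := hx
    simp only [kern]
    rw [Real.mul_rpow (by positivity) hx0.le, Real.inv_rpow hz.le, ← Real.rpow_neg hz.le]
    rw [show -(1 / (z⁻¹ * x)) - z * (z⁻¹ * x) = -x - z / x by field_simp; ring]
    rw [show -(β - 1) = 1 - β by ring]
    ring
  rw [h1] at h
  have h2 : ∫ x in Ioi (0:ℝ), (|(-1:ℝ)| * x ^ ((-1:ℝ) - 1)) • kern (-β) z (x ^ (-1:ℝ))
      = ∫ x in Ioi (0:ℝ), Real.exp (-(1 / x) - z * x) * x ^ (β - 1) := by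
    refine setIntegral_congr_fun measurableSet_Ioi fun x hx => ?_
    have hx0 : (0:ℝ) < x := hx
    simp only [kern, smul_eq_mul, abs_neg, abs_one, one_mul]
    rw [← Real.rpow_mul hx0.le, mul_left_comm, ← Real.rpow_add hx0, Real.rpow_neg_one]
    congr 2
    · field_simp
    · ring
  rw [h2]
  have h3 : z ^ (1 - β) = z * z ^ (-β) := by
    rw [sub_eq_add_neg, Real.rpow_add hz, Real.rpow_one]
  rw [h3, mul_assoc] at h
  exact (mul_left_cancel₀ hz.ne' h).symm

lemma hK_rec (β z : ℝ) (hz : 0 < z) : hK (β + 1) z = z * hK (β - 1) z + β * hK β z := by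
  have hlim0 : Tendsto (kern (β + 1) z) (nhdsWithin 0 (Ioi 0)) (nhds 0) := by
    obtain ⟨k, hk⟩ := exists_nat_gt (-β)
    have h1 : Tendsto (fun t : ℝ => (k.factorial / z ^ k) * (Real.exp (-t) * t ^ (β + k)))
        (nhdsWithin 0 (Ioi 0)) (nhds 0) := by
      have hc : ContinuousAt (fun t : ℝ =>
          (k.factorial / z ^ k) * (Real.exp (-t) * t ^ (β + k))) 0 := by
        have := Real.continuousAt_rpow_const 0 (β + k) (Or.inr (by linarith))
        fun_prop
      have := hc.tendsto
      rw [Real.zero_rpow (by linarith)] at this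
      simp only [mul_zero] at this
      exact this.mono_left nhdsWithin_le_nhds
    refine tendsto_of_tendsto_of_tendsto_of_le_of_le' tendsto_const_nhds h1 ?_ ?_
    · filter_upwards [self_mem_nhdsWithin] with t ht using kern_nonneg _ _ _ ht
    · filter_upwards [self_mem_nhdsWithin] with t ht
      have := kern_le (β + 1) z t k hz ht
      rwa [show β + 1 + (k:ℝ) - 1 = β + k by ring] at this
  have hlimT : Tendsto (kern (β + 1) z) atTop (nhds 0) := by
    have h1 := tendsto_rpow_mul_exp_neg_mul_atTop_nhds_zero β 1 one_pos
    refine tendsto_of_tendsto_of_tendsto_of_le_of_le' tendsto_const_nhds h1 ?_ ?_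
    · filter_upwards [eventually_gt_atTop 0] with t ht using kern_nonneg _ _ _ ht
    · filter_upwards [eventually_gt_atTop 0] with t ht
      have := kern_anti (β + 1) 0 z t ht hz.le
      rw [kern_zero] at this
      rw [neg_one_mul, mul_comm]
      rwa [add_sub_cancel_right] at this
  have huv : (fun t : ℝ => Real.exp (-t - z / t)) * (fun t : ℝ => t ^ β) = kern (β + 1) z := by
    ext t; simp [kern]
  have hd1 : ∀ t ∈ Ioi (0:ℝ), HasDerivAt (fun t : ℝ => Real.exp (-t - z / t))
      (Real.exp (-t - z / t) * (-1 + z / t ^ 2)) t := by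
    intro t ht
    have ht0 : t ≠ 0 := ne_of_gt ht
    have h1 : HasDerivAt (fun t : ℝ => -t - z / t) (-1 + z / t ^ 2) t := by
      have := (hasDerivAt_neg t).sub ((hasDerivAt_inv ht0).const_mul z)
      refine this.congr_deriv ?_
      ring
    exact h1.exp
  have hd2 : ∀ t ∈ Ioi (0:ℝ), HasDerivAt (fun t : ℝ => t ^ β) (β * t ^ (β - 1)) t :=
    fun t ht => Real.hasDerivAt_rpow_const (Or.inl (ne_of_gt ht))
  have heq : ∀ t ∈ Ioi (0:ℝ), Real.exp (-t - z / t) * (-1 + z / t ^ 2) * t ^ β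
      + Real.exp (-t - z / t) * (β * t ^ (β - 1))
      = -kern (β + 1) z t + z * kern (β - 1) z t + β * kern β z t := by
    intro t ht
    have ht0 : (0:ℝ) < t := ht
    simp only [kern]
    rw [add_sub_cancel_right, show β - 1 - 1 = β - (2:ℕ) by push_cast; ring, Real.rpow_sub ht0 β ((2:ℕ):ℝ),
      Real.rpow_natCast]
    ring
  have i1 := kern_integrable (β + 1) z hz
  have i2 := (kern_integrable (β - 1) z hz).const_mul z
  have i3 := (kern_integrable β z hz).const_mul β
  have hintg : IntegrableOn (fun t => -kern (β + 1) z t + z * kern (β - 1) z t + β * kern β z t)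
    (Ioi 0) := (i1.neg.add i2).add i3
  have key := integral_Ioi_deriv_mul_eq_sub (a := 0) (a' := 0) (b' := 0) hd1 hd2 ?_ ?_ ?_
  · rw [setIntegral_congr_fun measurableSet_Ioi heq, integral_add (by exact i1.neg.add i2) i3,
      integral_add (by exact i1.neg) i2, integral_neg, integral_const_mul, integral_const_mul] at key
    unfold hK
    linarith
  · exact hintg.congr_fun (fun t ht => (heq t ht).symm) measurableSet_Ioi
  · rw [huv]; exact hlim0
  · rw [huv]; exact hlimT

lemma hK_continuous_index (α z : ℝ) (hz : 0 < z) : ContinuousAt (fun β => hK β z) α := by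
  unfold hK
  refine tendsto_integral_filter_of_dominated_convergence
    (fun t => kern (α - 1) z t + kern (α + 1) z t)
    (Eventually.of_forall fun β => kern_meas _ _ _) ?_
    ((kern_integrable _ z hz).add (kern_integrable _ z hz)) ?_
  · filter_upwards [Ioo_mem_nhds (show α - 1 < α by linarith) (show α < α + 1 by linarith)]
      with β hβ
    filter_upwards [ae_restrict_mem measurableSet_Ioi] with t ht
    have ht0 : (0:ℝ) < t := ht
    rw [Real.norm_of_nonneg (kern_nonneg _ _ _ ht)]
    rcases le_total t 1 with h | h
    · have h1 : kern β z t ≤ kern (α - 1) z t := by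
        unfold kern
        have := Real.rpow_le_rpow_of_exponent_ge ht0 h (show α - 1 - 1 ≤ β - 1 by linarith [hβ.1])
        gcongr
      linarith [kern_nonneg (α + 1) z t ht]
    · have h1 : kern β z t ≤ kern (α + 1) z t := by
        unfold kern
        have := Real.rpow_le_rpow_of_exponent_le h (show β - 1 ≤ α + 1 - 1 by linarith [hβ.2])
        gcongr
      linarith [kern_nonneg (α - 1) z t ht]
  · filter_upwards [ae_restrict_mem measurableSet_Ioi] with t ht
    have ht0 : t ≠ 0 := ne_of_gt ht
    have : Continuous fun β => kern β z t := by
      unfold kern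
      have := Real.continuous_const_rpow ht0
      fun_prop
    exact this.tendsto α


lemma const_of_deriv_zero_Ioi (f : ℝ → ℝ) (hf : ∀ z, 0 < z → HasDerivAt f 0 z) :
    ∀ z, 0 < z → f z = f 1 := by
  intro z hz
  refine isOpen_Ioi.is_const_of_deriv_eq_zero (s := Ioi (0:ℝ)) isPreconnected_Ioi
    (fun y hy => (hf y hy).differentiableAt.differentiableWithinAt)
    (fun y hy => (hf y hy).deriv) (mem_Ioi.2 hz) (mem_Ioi.2 one_pos)

lemma zero_of_deriv_zero_Ioi (f : ℝ → ℝ) (hf : ∀ z, 0 < z → HasDerivAt f 0 z)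
    (hl : Tendsto f (nhdsWithin 0 (Ioi 0)) (nhds 0)) : ∀ z, 0 < z → f z = 0 := by
  intro z hz
  have h1 := const_of_deriv_zero_Ioi f hf
  have h2 : Tendsto f (nhdsWithin 0 (Ioi 0)) (nhds (f 1)) := by
    refine tendsto_const_nhds.congr' ?_
    filter_upwards [self_mem_nhdsWithin] with y hy using (h1 y hy).symm
  rw [h1 z hz]
  exact tendsto_nhds_unique h2 hl

/-- The combination of `I`-series that represents `hK`. -/
noncomputable def RK (β z : ℝ) : ℝ := π / Real.sin (π * β) * (It (-β) z - z ^ β * It β z)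

lemma zIt_hasDerivAt (β z : ℝ) (hz : 0 < z) :
    HasDerivAt (fun z => z ^ β * It β z) (z ^ (β - 1) * It (β - 1) z) z := by
  have h := (Real.hasDerivAt_rpow_const (x := z) (p := β) (Or.inl hz.ne')).mul (It_hasDerivAt β z)
  refine h.congr_deriv ?_
  rw [It_rec (β - 1) z, Real.rpow_sub hz, Real.rpow_one]
  rw [show β - 1 + 1 = β by ring, show β - 1 + 2 = β + 1 by ring]
  field_simp

lemma RK_hasDerivAt (β z : ℝ) (hz : 0 < z) :
    HasDerivAt (RK β) (-(z ^ (β - 1) * RK (1 - β) z)) z := by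
  have h := ((It_hasDerivAt (-β) z).sub (zIt_hasDerivAt β z hz)).const_mul (π / Real.sin (π * β))
  refine h.congr_deriv ?_
  unfold RK
  rw [show π * (1 - β) = π - π * β by ring, Real.sin_pi_sub, show -(1 - β) = β - 1 by ring,
    show -β + 1 = 1 - β by ring]
  have : z ^ (β - 1) * z ^ (1 - β) = 1 := by
    rw [← Real.rpow_add hz]; simp
  linear_combination (-(π / Real.sin (π * β) * It (1 - β) z)) * this

lemma RK_tendsto (β : ℝ) (h0 : 0 < β) (h1 : β < 1) :
    Tendsto (RK β) (nhdsWithin 0 (Ioi 0)) (nhds (Real.Gamma β)) := by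
  have hc : ContinuousAt (RK β) 0 := by
    unfold RK
    have a1 := (It_continuous (-β)).continuousAt (x := 0)
    have a2 := (It_continuous β).continuousAt (x := 0)
    have a3 := Real.continuousAt_rpow_const 0 β (Or.inr h0.le)
    fun_prop
  have hv : RK β 0 = Real.Gamma β := by
    unfold RK
    rw [Real.zero_rpow h0.ne', zero_mul, sub_zero, It_zero, ← Real.Gamma_mul_Gamma_one_sub,
      show -β + 1 = 1 - β by ring]
    have := Real.Gamma_pos_of_pos (show 0 < 1 - β by linarith)
    field_simp
  rw [← hv]
  exact hc.tendsto.mono_left nhdsWithin_le_nhds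

lemma hK_hasDerivAt' (β z : ℝ) (hz : 0 < z) :
    HasDerivAt (hK β) (-(z ^ (β - 1) * hK (1 - β) z)) z := by
  have := hK_hasDerivAt β z hz
  rwa [show β - 1 = -(1 - β) by ring, hK_neg _ _ hz, show -(1 - β) = β - 1 by ring] at this

lemma hK_eq_RK_base (β : ℝ) (h0 : 0 < β) (h1 : β < 1) : ∀ z, 0 < z → hK β z = RK β z := by
  set D : ℝ → ℝ → ℝ := fun β z => hK β z - RK β z with hD
  have dD : ∀ β z, 0 < z → HasDerivAt (D β) (-(z ^ (β - 1) * D (1 - β) z)) z := by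
    intro β z hz
    refine ((hK_hasDerivAt' β z hz).sub (RK_hasDerivAt β z hz)).congr_deriv ?_
    simp only [hD]; ring
  have tD : ∀ β, 0 < β → β < 1 → Tendsto (D β) (nhdsWithin 0 (Ioi 0)) (nhds 0) := by
    intro β h0 h1
    have := (hK_tendsto β h0).sub (RK_tendsto β h0 h1)
    rwa [sub_self] at this
  have tD0 := tD β h0 h1
  have tD1 := tD (1 - β) (by linarith) (by linarith)
  have dU := zIt_hasDerivAt β
  have tU : Tendsto (fun z => z ^ β * It β z) (nhdsWithin 0 (Ioi 0)) (nhds 0) := by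
    have a2 := (It_continuous β).continuousAt (x := 0)
    have a3 := Real.continuousAt_rpow_const 0 β (Or.inr h0.le)
    have := a3.tendsto.mul a2.tendsto
    rw [Real.zero_rpow h0.ne', zero_mul] at this
    exact this.mono_left nhdsWithin_le_nhds
  have tI : Tendsto (It (β - 1)) (nhdsWithin 0 (Ioi 0)) (nhds (Real.Gamma β)⁻¹) := by
    have := (It_continuous (β - 1)).tendsto 0
    rw [It_zero, show β - 1 + 1 = β by ring] at this
    exact this.mono_left nhdsWithin_le_nhds
  have hw : ∀ z, 0 < z → (z ^ β * It β z) * D (1 - β) z + It (β - 1) z * D β z = 0 := by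
    apply zero_of_deriv_zero_Ioi
    · intro z hz
      refine (((dU z hz).mul (dD (1 - β) z hz)).add
        ((It_hasDerivAt (β - 1) z).mul (dD β z hz))).congr_deriv ?_
      rw [show 1 - β - 1 = -β by ring, show 1 - (1 - β) = β by ring, show β - 1 + 1 = β by ring]
      have : z ^ β * z ^ (-β) = 1 := by rw [← Real.rpow_add hz]; simp
      linear_combination (-(It β z * D β z)) * this
    · have := (tU.mul tD1).add (tI.mul tD0)
      simpa using this
  have hIpos : ∀ z, 0 < z → 0 < It β z := by
    intro z hz
    refine (It_summable β z).tsum_pos (fun m => ?_) 0 ?_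
    · have := Real.Gamma_pos_of_pos (show 0 < (m:ℝ) + β + 1 by positivity)
      positivity
    · have := Real.Gamma_pos_of_pos (show 0 < ((0:ℕ):ℝ) + β + 1 by positivity)
      positivity
  have hUpos : ∀ z, 0 < z → 0 < z ^ β * It β z := fun z hz => by
    have := hIpos z hz
    positivity
  have hquot : ∀ z, 0 < z → HasDerivAt (fun z => D β z / (z ^ β * It β z)) 0 z := by
    intro z hz
    refine ((dD β z hz).div (dU z hz) (hUpos z hz).ne').congr_deriv ?_
    rw [div_eq_zero_iff]; left
    linear_combination (- z ^ (β - 1)) * hw z hz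
  have hconst := const_of_deriv_zero_Ioi _ hquot
  set k := D β 1 / (1 ^ β * It β 1)
  have hDk : ∀ z, 0 < z → D β z = k * (z ^ β * It β z) := by
    intro z hz
    have := hconst z hz
    rwa [div_eq_iff (hUpos z hz).ne'] at this
  have hD1 : ∀ z, 0 < z → D (1 - β) z = - k * It (β - 1) z := by
    intro z hz
    have h := hw z hz
    rw [hDk z hz] at h
    have h2 : (z ^ β * It β z) * (D (1 - β) z + k * It (β - 1) z) = 0 := by linarith
    rcases mul_eq_zero.1 h2 with h3 | h3
    · exact absurd h3 (hUpos z hz).ne'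
    · linarith
  have hk : k = 0 := by
    have t1 : Tendsto (D (1 - β)) (nhdsWithin 0 (Ioi 0)) (nhds (-k * (Real.Gamma β)⁻¹)) := by
      refine (tI.const_mul (-k)).congr' ?_
      filter_upwards [self_mem_nhdsWithin] with z hz using (hD1 z hz).symm
    have := tendsto_nhds_unique t1 tD1
    have hG := Real.Gamma_pos_of_pos h0
    rcases mul_eq_zero.1 this with h | h
    · linarith
    · exact absurd h (by positivity)
  intro z hz
  have := hDk z hz
  rw [hk, zero_mul] at this
  simp only [hD] at this
  linarith

lemma RK_neg (β z : ℝ) (hz : 0 < z) : RK (-β) z = z ^ (-β) * RK β z := by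
  unfold RK
  rw [mul_neg, Real.sin_neg, neg_neg]
  have : z ^ (-β) * z ^ β = 1 := by rw [← Real.rpow_add hz]; simp
  rw [div_neg]
  linear_combination (-(π / Real.sin (π * β)) * It β z) * (-this)

lemma RK_rec (β z : ℝ) (hz : 0 < z) : RK (β + 1) z = z * RK (β - 1) z + β * RK β z := by
  unfold RK
  rw [show π * (β + 1) = π * β + π by ring, show π * (β - 1) = π * β - π by ring,
    Real.sin_add_pi, Real.sin_sub_pi, div_neg]
  have e1 := It_rec (-(β + 1)) z
  have e2 := It_rec (β - 1) z
  rw [show -(β + 1) + 1 = -β by ring, show -(β + 1) + 2 = -(β - 1) by ring] at e1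
  rw [show β - 1 + 1 = β by ring, show β - 1 + 2 = β + 1 by ring] at e2
  rw [e1, e2, Real.rpow_add hz, Real.rpow_sub hz, Real.rpow_one]
  field_simp
  ring

lemma hK_eq_RK_pos (n : ℕ) : ∀ β : ℝ, n < β → β < n + 1 → ∀ z, 0 < z →
    hK β z = RK β z ∧ hK (β - 1) z = RK (β - 1) z := by
  induction n with
  | zero =>
    intro β h0 h1 z hz
    simp only [Nat.cast_zero, zero_add] at h0 h1
    refine ⟨hK_eq_RK_base β h0 h1 z hz, ?_⟩
    rw [show β - 1 = -(1 - β) by ring, hK_neg _ _ hz, RK_neg _ _ hz,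
      hK_eq_RK_base (1 - β) (by linarith) (by linarith) z hz]
  | succ n ih =>
    intro β h0 h1 z hz
    push_cast at h0 h1
    obtain ⟨a, b⟩ := ih (β - 1) (by linarith) (by linarith) z hz
    refine ⟨?_, a⟩
    have e1 := hK_rec (β - 1) z hz
    have e2 := RK_rec (β - 1) z hz
    rw [sub_add_cancel] at e1 e2
    rw [e1, e2, a, b]

lemma hK_eq_RK (β z : ℝ) (hβ : ∀ n : ℤ, (n:ℝ) ≠ β) (hz : 0 < z) : hK β z = RK β z := by
  have key : ∀ β : ℝ, 0 < β → (∀ n : ℤ, (n:ℝ) ≠ β) → hK β z = RK β z := by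
    intro β h0 hβ
    have h1 := Nat.floor_le h0.le
    have h2 := Nat.lt_floor_add_one β
    have h3 : ((⌊β⌋₊ : ℕ) : ℝ) ≠ β := by exact_mod_cast hβ (⌊β⌋₊ : ℤ)
    exact (hK_eq_RK_pos ⌊β⌋₊ β (lt_of_le_of_ne h1 h3) h2 z hz).1
  rcases lt_trichotomy β 0 with h | h | h
  · have := key (-β) (by linarith) (fun n hn => hβ (-n) (by push_cast; linarith))
    have e1 := hK_neg (-β) z hz
    have e2 := RK_neg (-β) z hz
    rw [neg_neg] at e1 e2
    rw [e1, e2, this]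
  · exact absurd h.symm (by simpa using hβ 0)
  · exact key β h hβ

lemma besselK_eq (α x : ℝ) (hx : 0 < x) :
    besselK α x = 1 / 2 * ((x / 2) ^ (-α) * hK α (x ^ 2 / 4)) := by
  have hz : 0 < x ^ 2 / 4 := by positivity
  unfold besselK
  apply Tendsto.limUnder_eq
  have hc : ContinuousAt (fun β => 1 / 2 * ((x / 2) ^ (-β) * hK β (x ^ 2 / 4))) α := by
    have h1 := hK_continuous_index α _ hz
    have h2 : Continuous fun β : ℝ => (x / 2) ^ (-β) :=
      (Real.continuous_const_rpow (by positivity : x / 2 ≠ 0)).comp continuous_neg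
    exact (h2.continuousAt.mul h1).const_mul _
  refine (hc.tendsto.mono_left nhdsWithin_le_nhds).congr' ?_
  have hnear : ∀ᶠ β in nhdsWithin α {α}ᶜ, ∀ n : ℤ, (n:ℝ) ≠ β := by
    have hm : Ioo ((⌈α⌉:ℝ) - 1) (⌊α⌋ + 1) ∈ nhdsWithin α {α}ᶜ :=
      nhdsWithin_le_nhds (Ioo_mem_nhds (by linarith [Int.ceil_lt_add_one α]) (Int.lt_floor_add_one α))
    filter_upwards [hm, self_mem_nhdsWithin] with β hβ hne n hn
    apply hne
    subst hn
    have a1 : ⌈α⌉ - 1 < n := by exact_mod_cast hβ.1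
    have a2 : n < ⌊α⌋ + 1 := by exact_mod_cast hβ.2
    have a3 : (⌈α⌉:ℝ) ≤ n := by exact_mod_cast (by lia : ⌈α⌉ ≤ n)
    have a4 : (n:ℝ) ≤ ⌊α⌋ := by exact_mod_cast (by lia : n ≤ ⌊α⌋)
    have := Int.le_ceil α
    have := Int.floor_le α
    simp only [mem_singleton_iff]
    linarith
  filter_upwards [hnear] with β hβ
  rw [hK_eq_RK β _ hβ hz, besselI_eq _ _ hx, besselI_eq _ _ hx]
  unfold RK
  have h4 : x ^ 2 / 4 = (x / 2) ^ (2:ℝ) := by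
    rw [show (2:ℝ) = ((2:ℕ):ℝ) by norm_num, Real.rpow_natCast]; push_cast; ring
  have h5 : (x / 2) ^ (-β) * (x ^ 2 / 4) ^ β = (x / 2) ^ β := by
    rw [h4, ← Real.rpow_mul (by positivity), ← Real.rpow_add (by positivity)]
    congr 1; ring
  rw [mul_comm π β, ← h5]
  ring


lemma HasSum.congr_val {f : ℕ → ℝ} {a b : ℝ} (h : HasSum f a) (hab : a = b) : HasSum f b := hab ▸ h

lemma hasSum_integral_aux (F : ℕ → ℝ → ℝ) (S : ℝ → ℝ) (b : ℕ → ℝ)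
    (hF : ∀ m, IntegrableOn (F m) (Ioi 0)) (hb : ∀ m, ∫ z in Ioi (0:ℝ), ‖F m z‖ ≤ b m)
    (hs : Summable b) (hS : ∀ z, 0 < z → HasSum (fun m => F m z) (S z)) :
    HasSum (fun m => ∫ z in Ioi (0:ℝ), F m z) (∫ z in Ioi (0:ℝ), S z) := by
  have h := hasSum_integral_of_summable_integral_norm (μ := volume.restrict (Ioi (0:ℝ))) hF
    (Summable.of_nonneg_of_le (fun m => integral_nonneg fun _ => norm_nonneg _) hb hs)
  rw [setIntegral_congr_fun measurableSet_Ioi (fun z hz => (hS z hz).tsum_eq)] at h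
  exact h

lemma gam_int (p : ℝ) (hp : -1 < p) : IntegrableOn (fun z => Real.exp (-z) * z ^ p) (Ioi 0) := by
  have := Real.GammaIntegral_convergent (s := p + 1) (by linarith)
  simpa using this

lemma gam_val (p : ℝ) (hp : -1 < p) : ∫ z in Ioi (0:ℝ), Real.exp (-z) * z ^ p = Real.Gamma (p + 1) := by
  rw [Real.Gamma_eq_integral (by linarith)]
  simp

lemma gB_meas (α : ℝ) : Measurable (gB α) := (gB_continuous α).measurable

lemma q_int (α Y p : ℝ) (hα : -1/2 ≤ α) (hY : 0 ≤ Y) (hp : -1 < p) :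
    IntegrableOn (fun z => Real.exp (-z) * z ^ p * gB α (Y * z)) (Ioi 0) := by
  refine Integrable.mono' ((gam_int p hp).const_mul (Real.Gamma (α + 1))⁻¹) ?_ ?_
  · have := gB_meas α
    exact Measurable.aestronglyMeasurable (by fun_prop)
  · filter_upwards [ae_restrict_mem measurableSet_Ioi] with z hz
    have hz0 : (0:ℝ) < z := hz
    rw [norm_mul, Real.norm_of_nonneg (by positivity), mul_comm]
    have := gB_bound α (Y * z) hα (by positivity)
    rw [Real.norm_eq_abs]
    gcongr

lemma q_zero (α Y : ℝ) (hα : -1/2 ≤ α) :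
    ∫ z in Ioi (0:ℝ), Real.exp (-z) * z ^ α * gB α (Y * z) = Real.exp (-Y) := by
  have hG : ∀ m : ℕ, 0 < Real.Gamma (m + α + 1) := fun m =>
    Real.Gamma_pos_of_pos (by have : (0:ℝ) ≤ m := by positivity
                              linarith)
  have hp : ∀ m : ℕ, -1 < α + m := fun m => by
    have : (0:ℝ) ≤ m := by positivity
    linarith
  have h := hasSum_integral_aux
    (fun m z => (-Y) ^ m / (m.factorial * Real.Gamma (m + α + 1)) * (Real.exp (-z) * z ^ (α + m)))
    (fun z => Real.exp (-z) * z ^ α * gB α (Y * z)) (fun m => |Y| ^ m / m.factorial)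
    (fun m => (gam_int _ (hp m)).const_mul _) ?_ (Real.summable_pow_div_factorial _) ?_
  · have h2 : HasSum (fun m : ℕ => (-Y) ^ m / m.factorial) (Real.exp (-Y)) := by
      rw [Real.exp_eq_exp_ℝ]
      exact NormedSpace.expSeries_div_hasSum_exp (-Y)
    refine h.unique (HasSum.congr_fun' h2 fun m => ?_)
    rw [integral_const_mul, gam_val _ (hp m), show α + (m:ℝ) + 1 = m + α + 1 by ring]
    have := hG m
    field_simp
  · intro m
    apply le_of_eq
    simp_rw [norm_mul]
    rw [integral_const_mul]
    have : ∫ z in Ioi (0:ℝ), ‖Real.exp (-z)‖ * ‖z ^ (α + m)‖ = Real.Gamma (m + α + 1) := by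
      rw [show (m:ℝ) + α + 1 = α + m + 1 by ring, ← gam_val _ (hp m)]
      refine setIntegral_congr_fun measurableSet_Ioi fun z hz => ?_
      have hz0 : (0:ℝ) < z := hz
      rw [Real.norm_of_nonneg (by positivity), Real.norm_of_nonneg (by positivity)]
    rw [this, norm_div, norm_pow, norm_mul, Real.norm_natCast, norm_neg,
      Real.norm_of_nonneg (hG m).le, Real.norm_eq_abs]
    have := hG m
    field_simp
  · intro z hz
    refine HasSum.congr_fun' ((It_hasSum α (-(Y * z))).mul_left (Real.exp (-z) * z ^ α)) fun m => ?_
    rw [Real.rpow_add hz, Real.rpow_natCast, ← neg_mul, mul_pow]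
    ring

/-- Normalised Laguerre-type polynomial. -/
noncomputable def lagL (j : ℕ) (α Y : ℝ) : ℝ :=
  ∑ m ∈ Finset.range (j + 1), (-Y) ^ m * (j.choose m) / Real.Gamma (m + α + 1)

lemma lagL_rec (j : ℕ) (α Y : ℝ) :
    lagL (j + 1) α Y = (α + 1) * lagL j (α + 1) Y - Y * (α + j + 2) * lagL j (α + 2) Y := by
  have hA : lagL j (α + 1) Y
      = ∑ m ∈ Finset.range (j + 2), (-Y) ^ m * (j.choose m) * (Real.Gamma (m + α + 2))⁻¹ := by
    rw [Finset.sum_range_succ]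
    simp only [Nat.choose_succ_self, Nat.cast_zero, mul_zero, zero_mul, add_zero]
    refine Finset.sum_congr rfl fun m _ => ?_
    rw [show (m:ℝ) + (α + 1) + 1 = m + α + 2 by ring]; ring
  have hB : - Y * lagL j (α + 2) Y
      = ∑ m ∈ Finset.range (j + 1), (-Y) ^ (m + 1) * (j.choose m)
          * (Real.Gamma ((m + 1 : ℕ) + α + 2))⁻¹ := by
    unfold lagL
    rw [Finset.mul_sum]
    refine Finset.sum_congr rfl fun m _ => ?_
    push_cast
    rw [show (m:ℝ) + (α + 2) + 1 = m + 1 + α + 2 by ring]; ring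
  have hC : lagL (j + 1) α Y = ∑ m ∈ Finset.range (j + 2), (-Y) ^ m * ((j + 1).choose m)
      * ((m + α + 1) * (Real.Gamma (m + α + 2))⁻¹) := by
    unfold lagL
    refine Finset.sum_congr rfl fun m _ => ?_
    have := inv_Gamma_rec (m + α + 1)
    rw [show (m:ℝ) + α + 1 + 1 = m + α + 2 by ring] at this
    rw [← this]; ring
  have : lagL (j + 1) α Y = (α + 1) * lagL j (α + 1) Y + (α + j + 2) * (-Y * lagL j (α + 2) Y) := by
    rw [hA, hB, hC, Finset.sum_range_succ' _ (j + 1), Finset.sum_range_succ' _ (j + 1), mul_add,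
      Finset.mul_sum, Finset.mul_sum, add_right_comm (∑ i ∈ Finset.range (j + 1), _), ← Finset.sum_add_distrib]
    congr 1
    · refine Finset.sum_congr rfl fun m _ => ?_
      have h1 : ((j + 1).choose (m + 1) : ℝ) = j.choose m + j.choose (m + 1) := by
        exact_mod_cast Nat.choose_succ_succ j m
      have h2 : (j.choose (m + 1) : ℝ) * (m + 1) = j.choose m * (j - m) := by
        by_cases hm : m ≤ j
        · have := Nat.choose_succ_right_eq j m
          have h3 : ((j - m : ℕ) : ℝ) = j - m := by push_cast [hm]; ring
          rw [← h3]
          exact_mod_cast this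
        · rw [Nat.choose_eq_zero_of_lt (by lia), Nat.choose_eq_zero_of_lt (by lia)]
          simp
      rw [h1]
      push_cast
      linear_combination ((-Y) ^ (m + 1) * (Real.Gamma (m + 1 + α + 2))⁻¹) * h2
    · simp
  rw [this]; ring

lemma q_val (Y : ℝ) (hY : 0 ≤ Y) (j : ℕ) : ∀ α : ℝ, -1/2 ≤ α →
    ∫ z in Ioi (0:ℝ), Real.exp (-z) * z ^ (α + j) * gB α (Y * z)
      = Real.exp (-Y) * (Real.Gamma (j + α + 1) * lagL j α Y) := by
  induction j with
  | zero =>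
    intro α hα
    have := Real.Gamma_pos_of_pos (show 0 < α + 1 by linarith)
    simp only [Nat.cast_zero, add_zero]
    rw [q_zero α Y hα]
    simp [lagL]
    field_simp
  | succ j ih =>
    intro α hα
    have hj : (0:ℝ) ≤ j := by positivity
    have i1 := ih (α + 1) (by linarith)
    have i2 := ih (α + 2) (by linarith)
    have e : ∀ z ∈ Ioi (0:ℝ), Real.exp (-z) * z ^ (α + (j + 1 : ℕ)) * gB α (Y * z)
        = (α + 1) * (Real.exp (-z) * z ^ (α + 1 + j) * gB (α + 1) (Y * z))
          - Y * (Real.exp (-z) * z ^ (α + 2 + j) * gB (α + 2) (Y * z)) := by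
      intro z hz
      rw [gB_rec α, show α + 2 + (j:ℝ) = (α + 1 + j) + 1 by ring, Real.rpow_add_one (ne_of_gt hz)]
      push_cast
      rw [show α + ((j:ℝ) + 1) = α + 1 + j by ring]
      ring
    rw [setIntegral_congr_fun measurableSet_Ioi e, integral_sub, integral_const_mul,
      integral_const_mul, i1, i2, lagL_rec]
    · push_cast
      rw [show (j:ℝ) + (α + 2) + 1 = (j + (α + 1) + 1) + 1 by ring,
        Real.Gamma_add_one (by linarith : (j:ℝ) + (α + 1) + 1 ≠ 0),
        show (j:ℝ) + 1 + α + 1 = j + (α + 1) + 1 by ring]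
      ring
    · exact (q_int _ _ _ (by linarith) hY (by linarith)).const_mul _
    · exact (q_int _ _ _ (by linarith) hY (by linarith)).const_mul _

lemma weber (α X Y : ℝ) (hα : -1/2 ≤ α) (hX : 0 ≤ X) (hY : 0 ≤ Y) :
    ∫ z in Ioi (0:ℝ), Real.exp (-z) * z ^ α * gB α (X * z) * gB α (Y * z)
      = Real.exp (-X - Y) * It α (X * Y) := by
  have hG : ∀ m : ℕ, 0 < Real.Gamma (m + α + 1) := fun m =>
    Real.Gamma_pos_of_pos (by have : (0:ℝ) ≤ m := by positivity
                              linarith)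
  have hp : ∀ m : ℕ, -1 < α + m := fun m => by
    have : (0:ℝ) ≤ m := by positivity
    linarith
  have hG0 := Real.Gamma_pos_of_pos (show 0 < α + 1 by linarith)
  have h := hasSum_integral_aux
    (fun m z => (-X) ^ m / (m.factorial * Real.Gamma (m + α + 1))
      * (Real.exp (-z) * z ^ (α + m) * gB α (Y * z)))
    (fun z => Real.exp (-z) * z ^ α * gB α (X * z) * gB α (Y * z))
    (fun m => (Real.Gamma (α + 1))⁻¹ * (X ^ m / m.factorial))
    (fun m => (q_int _ _ _ hα hY (hp m)).const_mul _) ?_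
    ((Real.summable_pow_div_factorial _).mul_left _) ?_
  · have hexp : HasSum (fun m : ℕ => (-X) ^ m / m.factorial) (Real.exp (-X)) := by
      rw [Real.exp_eq_exp_ℝ]
      exact NormedSpace.expSeries_div_hasSum_exp (-X)
    have hc := tsum_mul_tsum_eq_tsum_sum_antidiagonal_of_summable_norm
      (It_summable_norm α (X * Y)) (NormedSpace.norm_expSeries_div_summable (-X))
    rw [hexp.tsum_eq] at hc
    rw [← h.tsum_eq, sub_eq_add_neg, Real.exp_add, mul_right_comm, mul_comm (Real.exp (-X))]
    unfold It
    rw [hc, ← tsum_mul_right]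
    congr 1; ext j
    rw [integral_const_mul, q_val Y hY j α hα, Finset.Nat.sum_antidiagonal_eq_sum_range_succ_mk]
    have := hG j
    rw [show (-X) ^ j / (j.factorial * Real.Gamma (j + α + 1))
      * (Real.exp (-Y) * (Real.Gamma (j + α + 1) * lagL j α Y))
      = ((-X) ^ j / j.factorial * lagL j α Y) * Real.exp (-Y) by field_simp]
    congr 1
    unfold lagL
    rw [Finset.mul_sum]
    refine Finset.sum_congr rfl fun m hm => ?_
    have hmj : m ≤ j := by have := Finset.mem_range.1 hm; lia
    have h1 : (-X) ^ j = (-X) ^ m * (-X) ^ (j - m) := by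
      rw [← pow_add]; congr 1; lia
    have h2 : (X * Y) ^ m = (-X) ^ m * (-Y) ^ m := by rw [← mul_pow]; ring
    rw [Nat.cast_choose ℝ hmj, h1, h2]
    have := hG m
    simp only
    field_simp
  · intro m
    have hle : ∀ z ∈ Ioi (0:ℝ), ‖(-X) ^ m / (m.factorial * Real.Gamma (m + α + 1))
      * (Real.exp (-z) * z ^ (α + m) * gB α (Y * z))‖ ≤
      (X ^ m / (m.factorial * Real.Gamma (m + α + 1)) * (Real.Gamma (α + 1))⁻¹)
        * (Real.exp (-z) * z ^ (α + m)) := by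
      intro z hz
      have hz0 : (0:ℝ) < z := hz
      have hb := gB_bound α (Y * z) hα (by positivity)
      have := hG m
      rw [norm_mul, norm_mul, norm_div, norm_pow, norm_neg, Real.norm_of_nonneg hX,
        Real.norm_of_nonneg (by positivity : (0:ℝ) ≤ m.factorial * Real.Gamma (m + α + 1)),
        Real.norm_of_nonneg (by positivity : (0:ℝ) ≤ Real.exp (-z) * z ^ (α + m)),
        Real.norm_eq_abs]
      calc _ ≤ X ^ m / (m.factorial * Real.Gamma (m + α + 1))
          * (Real.exp (-z) * z ^ (α + m) * (Real.Gamma (α + 1))⁻¹) := by gcongr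
        _ = _ := by ring
    refine (setIntegral_mono_on ((q_int _ _ _ hα hY (hp m)).const_mul _).norm
      ((gam_int _ (hp m)).const_mul _) measurableSet_Ioi hle).trans (le_of_eq ?_)
    rw [integral_const_mul, gam_val _ (hp m), show α + (m:ℝ) + 1 = m + α + 1 by ring]
    have := hG m
    field_simp
  · intro z hz
    refine HasSum.congr_fun' ((It_hasSum α (-(X * z))).mul_left
      (Real.exp (-z) * z ^ α * gB α (Y * z))) (fun m => ?_) |>.congr_val ?_
    · rw [Real.rpow_add hz, Real.rpow_natCast, ← neg_mul, mul_pow]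
      ring
    · simp only [gB]; ring


lemma inner_gamma (t p : ℝ) (ht : 0 < t) (hp : -1 < p) :
    ∫ z in Ioi (0:ℝ), Real.exp (-(z / t)) * z ^ p = t ^ (p + 1) * Real.Gamma (p + 1) := by
  have := Real.integral_rpow_mul_exp_neg_mul_Ioi (a := p + 1) (r := 1 / t) (by linarith)
    (by positivity)
  rw [one_div_one_div] at this
  rw [← this]
  refine setIntegral_congr_fun measurableSet_Ioi fun z _ => ?_
  simp only [add_sub_cancel_right]
  rw [mul_comm, one_div_mul_eq_div]

lemma inner_gamma_int (t p : ℝ) (ht : 0 < t) (hp : -1 < p) :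
    IntegrableOn (fun z => Real.exp (-(z / t)) * z ^ p) (Ioi 0) := by
  have := integrableOn_rpow_mul_exp_neg_mul_rpow (s := p) (p := 1) (b := 1 / t) hp one_pos
    (by positivity)
  refine this.congr_fun (fun z _ => ?_) measurableSet_Ioi
  simp only [Real.rpow_one]
  rw [mul_comm, neg_mul, one_div_mul_eq_div]

lemma kern_split (β z t : ℝ) :
    kern β z t = Real.exp (-t) * t ^ (β - 1) * Real.exp (-(z / t)) := by
  unfold kern
  rw [sub_eq_add_neg, Real.exp_add]; ring

lemma prod_int (β p : ℝ) (hp : -1 < p) (hβp : 0 < β + p + 1) :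
    Integrable (fun x : ℝ × ℝ => kern β x.2 x.1 * x.2 ^ p)
      ((volume.restrict (Ioi (0:ℝ))).prod (volume.restrict (Ioi (0:ℝ)))) := by
  rw [integrable_prod_iff]
  · constructor
    · filter_upwards [ae_restrict_mem measurableSet_Ioi] with t ht
      have := (inner_gamma_int t p ht hp).const_mul (Real.exp (-t) * t ^ (β - 1))
      refine this.congr (ae_of_all _ fun z => ?_)
      simp only [kern_split]; ring
    · have := (gam_int (β + p) (by linarith)).mul_const (Real.Gamma (p + 1))
      refine IntegrableOn.congr_fun this (fun t ht => ?_) measurableSet_Ioi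
      have ht0 : (0:ℝ) < t := ht
      have e : ∀ z ∈ Ioi (0:ℝ), ‖kern β z t * z ^ p‖
          = (Real.exp (-t) * t ^ (β - 1)) * (Real.exp (-(z / t)) * z ^ p) := by
        intro z hz
        have hz0 : (0:ℝ) < z := hz
        rw [norm_mul, Real.norm_of_nonneg (kern_nonneg _ _ _ ht0),
          Real.norm_of_nonneg (by positivity), kern_split]
        ring
      simp only
      rw [setIntegral_congr_fun measurableSet_Ioi e, integral_const_mul, inner_gamma t p ht0 hp,
        show β + p = (β - 1) + (p + 1) by ring, Real.rpow_add ht0]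
      ring
  · have : Measurable fun x : ℝ × ℝ => kern β x.2 x.1 * x.2 ^ p := by
      unfold kern; fun_prop
    exact this.aestronglyMeasurable

lemma hK_rpow_int (β p : ℝ) (hp : -1 < p) (hβp : 0 < β + p + 1) :
    IntegrableOn (fun z => hK β z * z ^ p) (Ioi 0) := by
  have := (prod_int β p hp hβp).integral_prod_right
  refine this.congr (ae_of_all _ fun z => ?_)
  simp only [hK]
  rw [integral_mul_const]

/-- The integral after the substitution `z = x²/4`. -/
noncomputable def Phi (α r : ℝ) (n : ℕ) (s : ℝ) : ℝ :=
  ∫ z in Ioi (0:ℝ), hK α z * z ^ (α + n) * (gB (α + n) (s * z) * gB α (r * z))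

lemma Phi_hasDerivAt (α r : ℝ) (n : ℕ) (s : ℝ) (hα : -1/2 ≤ α) (hn : 0 < 2 * α + n + 1)
    (hr : 0 < r) (hs : 0 < s) : HasDerivAt (Phi α r n) (-Phi α r (n + 1) s) s := by
  have hn0 : (0:ℝ) ≤ n := by positivity
  have meas : ∀ (n : ℕ) (s : ℝ), AEStronglyMeasurable (fun z => hK α z * z ^ (α + n)
      * (gB (α + n) (s * z) * gB α (r * z))) (volume.restrict (Ioi (0:ℝ))) := by
    intro n s
    have h1 : ContinuousOn (fun z => hK α z * z ^ (α + n)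
      * (gB (α + n) (s * z) * gB α (r * z))) (Ioi 0) := by
      refine ((hK_continuousOn α).mul ?_).mul ?_
      · exact fun z hz => (Real.continuousAt_rpow_const z _ (Or.inl (ne_of_gt hz))).continuousWithinAt
      · have a1 := gB_continuous (α + n)
        have a2 := gB_continuous α
        exact Continuous.continuousOn (by fun_prop)
    exact h1.aestronglyMeasurable measurableSet_Ioi
  have bd : ∀ (n : ℕ) (s z : ℝ), 0 < s → 0 < z →
      ‖hK α z * z ^ (α + n) * (gB (α + n) (s * z) * gB α (r * z))‖ ≤
      (hK α z * z ^ (α + n)) * ((Real.Gamma (α + n + 1))⁻¹ * (Real.Gamma (α + 1))⁻¹) := by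
    intro n s z hs hz
    have hn0 : (0:ℝ) ≤ n := by positivity
    have b1 := gB_bound (α + n) (s * z) (by linarith) (by positivity)
    have b2 := gB_bound α (r * z) hα (by positivity)
    have h0 := hK_nonneg α z
    have hG := Real.Gamma_pos_of_pos (show 0 < α + n + 1 by linarith)
    rw [norm_mul, norm_mul (gB _ _), Real.norm_of_nonneg (by positivity : 0 ≤ hK α z * z ^ (α + n)),
      Real.norm_eq_abs, Real.norm_eq_abs]
    gcongr
  have hp0 : -1 < α + n := by linarith
  have I0 := (hK_rpow_int α (α + n) hp0 (by linarith)).mul_const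
    ((Real.Gamma (α + n + 1))⁻¹ * (Real.Gamma (α + 1))⁻¹)
  have I1 := (hK_rpow_int α (α + (n + 1 : ℕ)) (by push_cast; linarith)
    (by push_cast; linarith)).mul_const
    ((Real.Gamma (α + (n + 1 : ℕ) + 1))⁻¹ * (Real.Gamma (α + 1))⁻¹)
  have := hasDerivAt_integral_of_dominated_loc_of_deriv_le (μ := volume.restrict (Ioi (0:ℝ)))
    (F := fun s z => hK α z * z ^ (α + n) * (gB (α + n) (s * z) * gB α (r * z)))
    (F' := fun s z => -(hK α z * z ^ (α + (n + 1 : ℕ))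
      * (gB (α + (n + 1 : ℕ)) (s * z) * gB α (r * z)))) (x₀ := s) (s := Ioi 0)
    (bound := fun z => (hK α z * z ^ (α + (n + 1 : ℕ)))
      * ((Real.Gamma (α + (n + 1 : ℕ) + 1))⁻¹ * (Real.Gamma (α + 1))⁻¹)) (Ioi_mem_nhds hs)
    (Eventually.of_forall fun s => meas n s) ?_ (meas (n + 1) s).neg ?_ I1 ?_
  · have h := this.2
    rw [integral_neg] at h
    exact h
  · refine Integrable.mono' I0 (meas n s) ?_
    filter_upwards [ae_restrict_mem measurableSet_Ioi] with z hz using bd n s z hs hz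
  · filter_upwards [ae_restrict_mem measurableSet_Ioi] with z hz s hs
    rw [norm_neg]
    exact bd (n + 1) s z hs hz
  · filter_upwards [ae_restrict_mem measurableSet_Ioi] with z hz s hs
    have hz0 : (0:ℝ) < z := hz
    have h1 : HasDerivAt (fun s => gB (α + n) (s * z)) (-gB (α + n + 1) (s * z) * z) s := by
      have := (gB_hasDerivAt (α + n) (s * z)).comp s ((hasDerivAt_id s).mul_const z)
      simpa [Function.comp_def] using! this
    refine ((h1.mul_const (gB α (r * z))).const_mul (hK α z * z ^ (α + n))).congr_deriv ?_
    push_cast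
    rw [← add_assoc, Real.rpow_add_one hz0.ne']
    ring

lemma inner_weber (α s r t : ℝ) (hα : -1/2 ≤ α) (hs : 0 ≤ s) (hr : 0 ≤ r) (ht : 0 < t) :
    ∫ z in Ioi (0:ℝ), Real.exp (-(z / t)) * z ^ α * (gB α (s * z) * gB α (r * z))
      = t ^ (α + 1) * (Real.exp (-(s + r) * t) * It α (s * r * t ^ 2)) := by
  have h := integral_comp_mul_left_Ioi
    (fun z => Real.exp (-(z / t)) * z ^ α * (gB α (s * z) * gB α (r * z))) 0 ht
  rw [mul_zero, smul_eq_mul] at h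
  have hw := weber α (s * t) (r * t) hα (by positivity) (by positivity)
  have e : ∀ z ∈ Ioi (0:ℝ), Real.exp (-(t * z / t)) * (t * z) ^ α
      * (gB α (s * (t * z)) * gB α (r * (t * z)))
      = t ^ α * (Real.exp (-z) * z ^ α * gB α (s * t * z) * gB α (r * t * z)) := by
    intro z hz
    have hz0 : (0:ℝ) < z := hz
    rw [mul_div_cancel_left₀ _ ht.ne', Real.mul_rpow ht.le hz0.le, ← mul_assoc s, ← mul_assoc r]
    ring
  rw [setIntegral_congr_fun measurableSet_Ioi e, integral_const_mul, hw] at h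
  rw [Real.rpow_add_one ht.ne', show s * r * t ^ 2 = s * t * (r * t) by ring,
    show -(s + r) * t = -(s * t) - r * t by ring]
  rw [eq_inv_mul_iff_mul_eq₀ ht.ne'] at h
  rw [← h]; ring

lemma binom_hasSum (l x : ℝ) (hl : 0 < l) (hx0 : 0 ≤ x) (hx1 : x < 1) :
    HasSum (fun m : ℕ => Real.Gamma (m + l) * x ^ m / m.factorial) (Real.Gamma l * (1 - x) ^ (-l)) := by
  have hintg : ∀ m : ℕ, IntegrableOn (fun t : ℝ => x ^ m / m.factorial * (Real.exp (-t) * t ^ (l - 1 + m)))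
      (Ioi 0) := fun m => (gam_int _ (by have : (0:ℝ) ≤ m := by positivity
                                         linarith)).const_mul _
  have hS : ∀ t : ℝ, 0 < t → HasSum (fun m : ℕ => x ^ m / m.factorial
      * (Real.exp (-t) * t ^ (l - 1 + m))) (t ^ (l - 1) * Real.exp (-((1 - x) * t))) := by
    intro t ht
    have h2 : HasSum (fun m : ℕ => (x * t) ^ m / m.factorial) (Real.exp (x * t)) := by
      rw [Real.exp_eq_exp_ℝ]
      exact NormedSpace.expSeries_div_hasSum_exp (x * t)
    refine (HasSum.congr_fun' (h2.mul_left (t ^ (l - 1) * Real.exp (-t))) fun m => ?_).congr_val ?_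
    · rw [Real.rpow_add ht, Real.rpow_natCast, mul_pow]; ring
    · rw [mul_assoc, ← Real.exp_add]; congr 2; ring
  have hI := Real.integral_rpow_mul_exp_neg_mul_Ioi hl (show 0 < 1 - x by linarith)
  have hfi : IntegrableOn (fun t : ℝ => t ^ (l - 1) * Real.exp (-((1 - x) * t))) (Ioi 0) := by
    have := integrableOn_rpow_mul_exp_neg_mul_rpow (s := l - 1) (p := 1) (b := 1 - x)
      (by linarith) one_pos (by linarith)
    simpa only [Real.rpow_one, neg_mul] using this
  have hnn : ∀ (m : ℕ), ∀ t ∈ Ioi (0:ℝ), 0 ≤ x ^ m / m.factorial * (Real.exp (-t) * t ^ (l - 1 + m)) := by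
    intro m t ht
    have ht0 : (0:ℝ) < t := ht
    positivity
  have hsumm : Summable fun m : ℕ => ∫ t in Ioi (0:ℝ), x ^ m / m.factorial
      * (Real.exp (-t) * t ^ (l - 1 + m)) := by
    refine summable_of_sum_range_le (c := ∫ t in Ioi (0:ℝ), t ^ (l - 1) * Real.exp (-((1 - x) * t)))
      (fun m => setIntegral_nonneg measurableSet_Ioi (hnn m)) fun N => ?_
    rw [← integral_finsetSum _ (fun m _ => hintg m)]
    refine setIntegral_mono_on (integrable_finsetSum _ fun m _ => hintg m) hfi measurableSet_Ioi
      fun t ht => ?_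
    exact sum_le_hasSum _ (fun m _ => hnn m t ht) (hS t ht)
  have h := hasSum_integral_aux _ _ _ hintg
    (fun m => le_of_eq (setIntegral_congr_fun measurableSet_Ioi fun t ht =>
      Real.norm_of_nonneg (hnn m t ht))) hsumm hS
  rw [hI] at h
  refine (HasSum.congr_fun' h fun m => ?_).congr_val ?_
  · have : (0:ℝ) ≤ m := by positivity
    rw [integral_const_mul, gam_val _ (by linarith), show l - 1 + (m:ℝ) + 1 = m + l by ring]
    ring
  · rw [one_div, Real.inv_rpow (by linarith), ← Real.rpow_neg (by linarith)]
    ring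


lemma base_fubini (α r s : ℝ) (hα : -1/2 < α) (hr : 0 < r) (hs : 0 < s) :
    Phi α r 0 s = ∫ t in Ioi (0:ℝ), t ^ (2 * α) * Real.exp (-((1 + s + r) * t))
      * It α (s * r * t ^ 2) := by
  have hG := Real.Gamma_pos_of_pos (show 0 < α + 1 by linarith)
  have hintg : Integrable (fun x : ℝ × ℝ => kern α x.2 x.1 * x.2 ^ α
      * (gB α (s * x.2) * gB α (r * x.2)))
      ((volume.restrict (Ioi (0:ℝ))).prod (volume.restrict (Ioi (0:ℝ)))) := by
    refine Integrable.mono' ((prod_int α α (by linarith) (by linarith)).mul_const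
      ((Real.Gamma (α + 1))⁻¹ * (Real.Gamma (α + 1))⁻¹)) ?_ ?_
    · have := gB_meas α
      have : Measurable (fun x : ℝ × ℝ => kern α x.2 x.1 * x.2 ^ α
        * (gB α (s * x.2) * gB α (r * x.2))) := by
        unfold kern; fun_prop
      exact this.aestronglyMeasurable
    · rw [Measure.prod_restrict]
      filter_upwards [ae_restrict_mem (measurableSet_Ioi.prod measurableSet_Ioi)] with x hx
      have h1 : 0 < x.1 := hx.1
      have h2 : 0 < x.2 := hx.2
      have b1 := gB_bound α (s * x.2) hα.le (by positivity)
      have b2 := gB_bound α (r * x.2) hα.le (by positivity)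
      have h0 := kern_nonneg α x.2 x.1 h1
      rw [norm_mul, norm_mul (gB _ _), Real.norm_of_nonneg (by positivity),
        Real.norm_eq_abs, Real.norm_eq_abs]
      gcongr
  have hsw := integral_integral_swap (f := fun t z => kern α z t * z ^ α
      * (gB α (s * z) * gB α (r * z))) hintg
  have e1 : Phi α r 0 s = ∫ z in Ioi (0:ℝ), ∫ t in Ioi (0:ℝ), kern α z t * z ^ α
      * (gB α (s * z) * gB α (r * z)) := by
    unfold Phi hK
    simp only [Nat.cast_zero, add_zero]
    refine setIntegral_congr_fun measurableSet_Ioi fun z _ => ?_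
    rw [integral_mul_const, integral_mul_const]
  rw [e1, ← hsw]
  refine setIntegral_congr_fun measurableSet_Ioi fun t ht => ?_
  have ht0 : (0:ℝ) < t := ht
  have e2 : ∀ z ∈ Ioi (0:ℝ), kern α z t * z ^ α * (gB α (s * z) * gB α (r * z))
      = Real.exp (-t) * t ^ (α - 1)
        * (Real.exp (-(z / t)) * z ^ α * (gB α (s * z) * gB α (r * z))) := by
    intro z _
    rw [kern_split]; ring
  have e3 : t ^ (2 * α) = t ^ (α - 1) * t ^ (α + 1) := by
    rw [← Real.rpow_add ht0]; congr 1; ring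
  rw [setIntegral_congr_fun measurableSet_Ioi e2, integral_const_mul,
    inner_weber α s r t hα.le hs.le hr.le ht0, e3, show -((1 + s + r) * t) = -t + (-(s + r) * t) by ring, Real.exp_add]
  ring

lemma base_val (α r s : ℝ) (hα : -1/2 < α) (hr : 0 < r) (hs : 0 < s) :
    Phi α r 0 s = 2 ^ (2 * α) / √π * (Real.Gamma (α + 1/2)
      * ((s + 1 - r) ^ 2 + 4 * r) ^ (-(α + 1/2))) := by
  rw [base_fubini α r s hα hr hs]
  set A : ℝ := 1 + s + r with hA
  have hA0 : 0 < A := by positivity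
  have hQ : (s + 1 - r) ^ 2 + 4 * r = A ^ 2 * (1 - 4 * (s * r) / A ^ 2) := by
    field_simp
    rw [hA]; ring
  have hx1 : 4 * (s * r) / A ^ 2 < 1 := by
    rw [div_lt_one (by positivity)]
    nlinarith [sq_nonneg (s + 1 - r)]
  have hb := binom_hasSum (α + 1/2) (4 * (s * r) / A ^ 2) (by linarith) (by positivity) hx1
  have hm0 : ∀ m : ℕ, (0:ℝ) ≤ m := fun m => by positivity
  have hG : ∀ m : ℕ, 0 < Real.Gamma (m + α + 1) := fun m =>
    Real.Gamma_pos_of_pos (by have := hm0 m; linarith)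
  have hintg : ∀ m : ℕ, IntegrableOn (fun t : ℝ => (s * r) ^ m / (m.factorial * Real.Gamma (m + α + 1))
      * (t ^ (2 * α + 2 * m) * Real.exp (-(A * t)))) (Ioi 0) := by
    intro m
    have := hm0 m
    have := integrableOn_rpow_mul_exp_neg_mul_rpow (s := 2 * α + 2 * m) (p := 1) (b := A)
      (by linarith) one_pos hA0
    simp only [Real.rpow_one, neg_mul] at this
    exact Integrable.const_mul this _
  have hval : ∀ m : ℕ, ∫ t in Ioi (0:ℝ), (s * r) ^ m / (m.factorial * Real.Gamma (m + α + 1))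
      * (t ^ (2 * α + 2 * m) * Real.exp (-(A * t)))
      = 2 ^ (2 * α) / √π * A ^ (-(2 * α + 1)) * (Real.Gamma (m + (α + 1/2))
        * (4 * (s * r) / A ^ 2) ^ m / m.factorial) := by
    intro m
    have := hm0 m
    have h1 := Real.integral_rpow_mul_exp_neg_mul_Ioi (a := 2 * α + 2 * m + 1) (r := A)
      (by linarith) hA0
    rw [show 2 * α + 2 * (m:ℝ) + 1 - 1 = 2 * α + 2 * m by ring] at h1
    rw [integral_const_mul, h1]
    have h2 := Real.Gamma_mul_Gamma_add_half (m + (α + 1/2))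
    rw [show (m:ℝ) + (α + 1/2) + 1/2 = m + α + 1 by ring,
      show 2 * ((m:ℝ) + (α + 1/2)) = 2 * α + 2 * m + 1 by ring] at h2
    rw [show 1 - (2 * α + 2 * (m:ℝ) + 1) = -(2 * α + 2 * m) by ring, Real.rpow_neg (by norm_num)] at h2
    have h3 : (2:ℝ) ^ (2 * α + 2 * m) = 2 ^ (2 * α) * 4 ^ m := by
      rw [Real.rpow_add (by norm_num), show (2:ℝ) * m = ((2 * m : ℕ) : ℝ) by push_cast; ring,
        Real.rpow_natCast, pow_mul]; norm_num
    have h4 : (1 / A) ^ (2 * α + 2 * (m:ℝ) + 1) = A ^ (-(2 * α + 1)) * (1 / A ^ 2) ^ m := by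
      rw [show 2 * α + 2 * (m:ℝ) + 1 = (2 * α + 1) + ((2 * m : ℕ) : ℝ) by push_cast; ring,
        Real.rpow_add (by positivity), Real.rpow_natCast, pow_mul, one_div,
        Real.inv_rpow hA0.le, ← Real.rpow_neg hA0.le]
      simp
    have hpi : (0:ℝ) < √π := by positivity
    have h5 : Real.Gamma (2 * α + 2 * m + 1) = 2 ^ (2 * α) * 4 ^ m / √π
        * (Real.Gamma (m + (α + 1/2)) * Real.Gamma (m + α + 1)) := by
      rw [h2, h3]
      have : (0:ℝ) < 2 ^ (2 * α) := by positivity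
      field_simp
    rw [h4, h5]
    have := hG m
    rw [show 4 * (s * r) / A ^ 2 = 4 * (s * r) * (1 / A ^ 2) by ring]
    generalize s * r = q
    generalize 1 / A ^ 2 = B
    generalize Real.Gamma (m + (α + 1/2)) = G
    rw [mul_pow, mul_pow]
    field_simp
  have hS : ∀ t : ℝ, 0 < t → HasSum (fun m : ℕ => (s * r) ^ m / (m.factorial * Real.Gamma (m + α + 1))
      * (t ^ (2 * α + 2 * m) * Real.exp (-(A * t))))
      (t ^ (2 * α) * Real.exp (-(A * t)) * It α (s * r * t ^ 2)) := by
    intro t ht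
    refine HasSum.congr_fun' ((It_hasSum α (s * r * t ^ 2)).mul_left _) fun m => ?_
    rw [Real.rpow_add ht, show (2:ℝ) * m = ((2 * m : ℕ) : ℝ) by push_cast; ring,
        Real.rpow_natCast, pow_mul, mul_pow (s * r)]
    ring
  have h := hasSum_integral_aux _ _ _ hintg
    (fun m => le_of_eq ((setIntegral_congr_fun measurableSet_Ioi fun t ht =>
      Real.norm_of_nonneg (by
        have ht0 : (0:ℝ) < t := ht
        have := hG m
        positivity)).trans (hval m))) (hb.summable.mul_left _) hS
  rw [(funext hval : _ = _)] at h
  rw [h.unique (hb.mul_left _), hQ, Real.mul_rpow (by positivity) (by linarith),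
    ← Real.rpow_natCast, ← Real.rpow_mul hA0.le]
  push_cast
  rw [show (2:ℝ) * -(α + 1/2) = -(2 * α + 1) by ring]
  ring


/-- `n! / (k! (n-2k)!)`, zero when `2k > n`. -/
noncomputable def cf (n k : ℕ) : ℝ := (n.choose (2 * k) : ℝ) * (2 * k).factorial / k.factorial

lemma cf_rec (n k : ℕ) : cf (n + 1) (k + 1) = cf n (k + 1) + 2 * ((n:ℝ) - 2 * k) * cf n k := by
  unfold cf
  have h1 : ((n + 1).choose (2 * (k + 1)) : ℝ) = n.choose (2 * k + 1) + n.choose (2 * (k + 1)) := by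
    exact_mod_cast Nat.choose_succ_succ n (2 * k + 1)
  have h2 : (n.choose (2 * k + 1) : ℝ) * (2 * k + 1) = n.choose (2 * k) * (n - 2 * k) := by
    by_cases hm : 2 * k ≤ n
    · have := Nat.choose_succ_right_eq n (2 * k)
      have h3 : ((n - 2 * k : ℕ) : ℝ) = n - 2 * k := by push_cast [hm]; ring
      rw [← h3]
      exact_mod_cast this
    · rw [Nat.choose_eq_zero_of_lt (by lia), Nat.choose_eq_zero_of_lt (by lia)]
      simp
  have h4 : ((2 * (k + 1)).factorial : ℝ) = (2 * k + 2) * ((2 * k + 1) * (2 * k).factorial) := by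
    have : (2 * (k + 1)) = 2 * k + 1 + 1 := by ring
    rw [this, Nat.factorial_succ, Nat.factorial_succ]; push_cast; ring
  have h5 : ((k + 1).factorial : ℝ) = (k + 1) * k.factorial := by
    rw [Nat.factorial_succ]; push_cast; ring
  rw [h1, h4, h5]
  have : (0:ℝ) < k.factorial := by positivity
  have : (0:ℝ) < (k:ℝ) + 1 := by positivity
  field_simp
  linear_combination h2

lemma cf_zero (n : ℕ) : cf n 0 = 1 := by simp [cf]

lemma cf_gt (n k : ℕ) (h : n < 2 * k) : cf n k = 0 := by
  simp [cf, Nat.choose_eq_zero_of_lt h]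

lemma cf_le (n k : ℕ) (h : 2 * k ≤ n) : cf n k = n.factorial / (k.factorial * (n - 2 * k).factorial) := by
  unfold cf
  rw [Nat.cast_choose ℝ h]
  field_simp

/-- The monomials. -/
noncomputable def MM (l r : ℝ) (n k : ℕ) (u : ℝ) : ℝ :=
  (-1) ^ k * Real.Gamma (l + n - k) * (2 * u) ^ (n - 2 * k) * (u ^ 2 + 4 * r) ^ (-(l + n - k))

noncomputable def EE (l r : ℝ) (n : ℕ) (u : ℝ) : ℝ :=
  ∑ k ∈ Finset.range (n + 1), cf n k * MM l r n k u

lemma term_hasDerivAt (l r : ℝ) (n k : ℕ) (u : ℝ) (hl : 0 ≤ l) (hln : 0 < l + n) (hr : 0 < r) :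
    HasDerivAt (fun u => cf n k * MM l r n k u)
      (-(cf n k * MM l r (n + 1) k u + 2 * ((n:ℝ) - 2 * k) * cf n k * MM l r (n + 1) (k + 1) u)) u := by
  by_cases h : 2 * k ≤ n
  · have hQ : 0 < u ^ 2 + 4 * r := by positivity
    have hk : (2:ℝ) * k ≤ n := by exact_mod_cast h
    have hp : 0 < l + n - k := by
      have : (0:ℝ) ≤ k := by positivity
      rcases eq_or_lt_of_le this with h0 | h0 <;> linarith
    have d1 : HasDerivAt (fun u : ℝ => (2 * u) ^ (n - 2 * k))
        (((n - 2 * k : ℕ) : ℝ) * (2 * u) ^ (n - 2 * k - 1) * 2) u := by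
      have := ((hasDerivAt_id u).const_mul 2).pow (n - 2 * k)
      simpa using! this
    have d2 : HasDerivAt (fun u : ℝ => (u ^ 2 + 4 * r) ^ (-(l + n - k)))
        ((2 * u) * (-(l + n - k)) * (u ^ 2 + 4 * r) ^ (-(l + n - k) - 1)) u := by
      have h0 : HasDerivAt (fun u : ℝ => u ^ 2 + 4 * r) (2 * u) u := by
        have := (hasDerivAt_pow 2 u).add_const (4 * r)
        simpa using this
      exact h0.rpow_const (Or.inl hQ.ne')
    have d := ((d1.mul d2).const_mul (cf n k * ((-1) ^ k * Real.Gamma (l + n - k))))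
    refine (d.congr_of_eventuallyEq (Eventually.of_forall fun v => ?_)).congr_deriv ?_
    · simp only [MM, Pi.mul_apply]; ring
    · have e1 : ((n - 2 * k : ℕ) : ℝ) = n - 2 * k := by push_cast [h]; ring
      have g : Real.Gamma (l + (n + 1 : ℕ) - k) = (l + n - k) * Real.Gamma (l + n - k) := by
        rw [← Real.Gamma_add_one hp.ne']; congr 1; push_cast; ring
      unfold MM
      rw [g, e1, show n + 1 - 2 * k = (n - 2 * k) + 1 by lia,
        show n + 1 - 2 * (k + 1) = n - 2 * k - 1 by lia]
      push_cast
      rw [show -(l + ((n:ℝ) + 1) - k) = -(l + n - k) - 1 by ring,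
        show l + ((n:ℝ) + 1) - (k + 1) = l + n - k by ring]
      ring
  · rw [cf_gt n k (by lia)]
    simpa using hasDerivAt_const u (0:ℝ)

lemma EE_hasDerivAt (l r : ℝ) (n : ℕ) (u : ℝ) (hl : 0 ≤ l) (hln : 0 < l + n) (hr : 0 < r) :
    HasDerivAt (EE l r n) (-EE l r (n + 1) u) u := by
  have h := HasDerivAt.fun_sum (u := Finset.range (n + 1))
    (fun k _ => term_hasDerivAt l r n k u hl hln hr)
  refine h.congr_deriv ?_
  rw [Finset.sum_neg_distrib, Finset.sum_add_distrib]
  congr 1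
  unfold EE
  rw [Finset.sum_range_succ' (n := n + 1)]
  have : ∑ k ∈ Finset.range (n + 1), cf n k * MM l r (n + 1) k u
      = ∑ k ∈ Finset.range (n + 1), cf n (k + 1) * MM l r (n + 1) (k + 1) u
        + cf n 0 * MM l r (n + 1) 0 u := by
    rw [← Finset.sum_range_succ' (fun k => cf n k * MM l r (n + 1) k u),
      Finset.sum_range_succ _ (n + 1), cf_gt n (n + 1) (by lia)]
    ring
  rw [this, cf_zero, cf_zero, add_right_comm, ← Finset.sum_add_distrib]
  congr 1
  refine Finset.sum_congr rfl fun k _ => ?_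
  rw [cf_rec]; ring

lemma EE_gegen (l r : ℝ) (n : ℕ) (u w : ℝ) (hw : 0 < w) (hQ : u ^ 2 + 4 * r = w ^ 2) :
    EE l r n u = n.factorial * w ^ (-(2 * l + n)) * gegenbauerCt n l (u / w) := by
  unfold EE gegenbauerCt
  rw [Finset.mul_sum]
  symm
  refine (Finset.sum_congr rfl fun k hk => ?_).trans
    (Finset.sum_subset (Finset.range_mono (by lia)) fun k _ hk => ?_)
  · have hk2 : 2 * k ≤ n := by have := Finset.mem_range.1 hk; lia
    rw [cf_le n k hk2]
    unfold MM
    rw [hQ, ← Real.rpow_natCast w 2, ← Real.rpow_mul hw.le, show 2 * (u / w) = 2 * u / w by ring,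
      div_pow]
    have e1 : ((n - 2 * k : ℕ) : ℝ) = n - 2 * k := by push_cast [hk2]; ring
    have : w ^ (((2:ℕ):ℝ) * -(l + n - k)) = w ^ (-(2 * l + n)) / w ^ (n - 2 * k) := by
      rw [← Real.rpow_natCast w (n - 2 * k), ← Real.rpow_sub hw, e1]
      congr 1; push_cast; ring
    rw [this]
    field_simp
  · rw [cf_gt n k (by have := Finset.mem_range.not.1 hk; lia), zero_mul]

lemma EE_zero (l r u : ℝ) : EE l r 0 u = Real.Gamma l * (u ^ 2 + 4 * r) ^ (-l) := by
  simp [EE, MM, cf_zero]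

lemma EE_one (r u : ℝ) : EE 0 r 1 u = 2 * u / (u ^ 2 + 4 * r) := by
  simp [EE, MM, Finset.sum_range_succ, cf_zero, cf_gt, Real.rpow_neg_one]
  ring

lemma step (α r C : ℝ) (n : ℕ) (hα : -1/2 ≤ α) (hn : 0 < 2 * α + n + 1) (hr : 0 < r)
    (h : ∀ s, 0 < s → Phi α r n s = C * EE (α + 1/2) r n (s + 1 - r)) :
    ∀ s, 0 < s → Phi α r (n + 1) s = C * EE (α + 1/2) r (n + 1) (s + 1 - r) := by
  intro s hs
  have d1 := Phi_hasDerivAt α r n s hα hn hr hs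
  have hn0 : (0:ℝ) ≤ n := by positivity
  have d2 := (EE_hasDerivAt (α + 1/2) r n (s + 1 - r) (by linarith) (by linarith) hr)
  have d3 : HasDerivAt (fun s => C * EE (α + 1/2) r n (s + 1 - r))
      (C * -EE (α + 1/2) r (n + 1) (s + 1 - r)) s := by
    have d0 : HasDerivAt (fun s : ℝ => s + 1 - r) 1 s :=
      ((hasDerivAt_id s).add_const 1).sub_const r
    have := (d2.comp s d0).const_mul C
    simpa [Function.comp_def] using this
  have d4 := d3.congr_of_eventuallyEq (f₁ := Phi α r n) (by
    filter_upwards [Ioi_mem_nhds hs] with x hx using h x hx)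
  have := d1.unique d4
  linarith

lemma Phi_gt (α r : ℝ) (hα : -1/2 < α) (hr : 0 < r) (n : ℕ) :
    ∀ s, 0 < s → Phi α r n s = 2 ^ (2 * α) / √π * EE (α + 1/2) r n (s + 1 - r) := by
  induction n with
  | zero => intro s hs; rw [EE_zero, base_val α r s hα hr hs]
  | succ n ih =>
    have hn0 : (0:ℝ) ≤ n := by positivity
    exact step α r _ n hα.le (by linarith) hr ih


lemma fact_gamma_half (m : ℕ) : (m.factorial : ℝ) * Real.Gamma (m + -1/2 + 1)
    = (2 * m).factorial * √π / 4 ^ m := by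
  have h := Real.Gamma_mul_Gamma_add_half ((m:ℝ) + 1/2)
  rw [show (m:ℝ) + 1/2 + 1/2 = m + 1 by ring, show 2 * ((m:ℝ) + 1/2) = ((2 * m : ℕ) : ℝ) + 1 by
    push_cast; ring, Real.Gamma_nat_eq_factorial, Real.Gamma_nat_eq_factorial,
    show (1:ℝ) - (((2 * m : ℕ) : ℝ) + 1) = -((2 * m : ℕ) : ℝ) by ring, Real.rpow_neg (by norm_num),
    Real.rpow_natCast, pow_mul] at h
  rw [show (m:ℝ) + -1/2 + 1 = m + 1/2 by ring, mul_comm, h]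
  norm_num
  ring

lemma gB_neg_half (z : ℝ) (hz : 0 < z) : gB (-1/2) z = Real.cos (2 * √z) / √π := by
  unfold gB
  refine (It_hasSum (-1/2) (-z)).unique ?_
  refine HasSum.congr_fun' ((Real.hasSum_cos (2 * √z)).div_const (√π)) fun m => ?_
  have hpi : (0:ℝ) < √π := by positivity
  rw [fact_gamma_half, pow_mul, mul_pow, Real.sq_sqrt hz.le, mul_pow, neg_pow]
  norm_num
  field_simp

lemma gB_half (z : ℝ) (hz : 0 < z) : gB (1/2) z = Real.sin (2 * √z) / (√z * √π) := by
  have d1 := gB_hasDerivAt (-1/2) z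
  rw [show (-1/2 : ℝ) + 1 = 1/2 by norm_num] at d1
  have h0 : HasDerivAt (fun z => 2 * √z) (2 * (1 / (2 * √z))) z :=
    (Real.hasDerivAt_sqrt hz.ne').const_mul 2
  have d2 := h0.cos.div_const (√π)
  have d3 := d2.congr_of_eventuallyEq (f₁ := gB (-1/2)) (by
    filter_upwards [Ioi_mem_nhds hz] with x hx using gB_neg_half x hx)
  have := d1.unique d3
  have hpi : (0:ℝ) < √π := by positivity
  have hsz : (0:ℝ) < √z := by positivity
  rw [← neg_inj, this]
  field_simp

lemma hK_half (z : ℝ) (hz : 0 < z) : hK (1/2) z = √π * Real.exp (-(2 * √z)) := by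
  have hd : ∀ z, 0 < z → HasDerivAt (fun z => hK (1/2) z * Real.exp (2 * √z) - √π) 0 z := by
    intro z hz
    have h0 : HasDerivAt (fun z => 2 * √z) (2 * (1 / (2 * √z))) z :=
      (Real.hasDerivAt_sqrt hz.ne').const_mul 2
    have h1 := ((hK_hasDerivAt' (1/2) z hz).mul h0.exp).sub_const (√π)
    refine h1.congr_deriv ?_
    rw [show (1/2 : ℝ) - 1 = -(1/2) by norm_num, show (1 : ℝ) - 1/2 = 1/2 by norm_num,
      Real.rpow_neg hz.le, ← Real.sqrt_eq_rpow]
    have hsz : (0:ℝ) < √z := by positivity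
    field_simp
    ring
  have hl : Tendsto (fun z => hK (1/2) z * Real.exp (2 * √z) - √π) (nhdsWithin 0 (Ioi 0)) (nhds 0) := by
    have h1 := hK_tendsto (1/2) (by norm_num)
    have h2 : Tendsto (fun z => Real.exp (2 * √z)) (nhdsWithin 0 (Ioi 0)) (nhds (Real.exp (2 * √0))) := by
      apply tendsto_nhdsWithin_of_tendsto_nhds
      have : Continuous fun z => Real.exp (2 * √z) := by fun_prop
      exact this.tendsto 0
    have h3 := (h1.mul h2).sub_const (√π)
    rw [Real.Gamma_one_half_eq] at h3
    simpa using h3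
  have h := zero_of_deriv_zero_Ioi _ hd hl z hz
  rw [Real.exp_neg, eq_mul_inv_iff_mul_eq₀ (Real.exp_ne_zero _)]
  linarith

lemma exp_sin_int (p : ℝ) : IntegrableOn (fun x => Real.exp (-(2 * x)) * Real.sin (2 * p * x)) (Ioi 0) := by
  have h := (integrableOn_exp_mul_Ioi (a := -2) (by norm_num) 0)
  refine Integrable.mono' h ?_ (ae_of_all _ fun x => ?_)
  · exact Continuous.aestronglyMeasurable (by fun_prop)
  · rw [norm_mul, Real.norm_of_nonneg (Real.exp_pos _).le, Real.norm_eq_abs]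
    have := Real.abs_sin_le_one (2 * p * x)
    rw [← neg_mul]
    nlinarith [Real.exp_pos (-2 * x)]

lemma exp_sin_val (p : ℝ) : ∫ x in Ioi (0:ℝ), Real.exp (-(2 * x)) * Real.sin (2 * p * x)
    = p / (2 * (1 + p ^ 2)) := by
  have hp : 0 < 1 + p ^ 2 := by positivity
  have hlim : Tendsto (fun x : ℝ => Real.exp (-(2 * x))) atTop (nhds 0) :=
    Real.tendsto_exp_neg_atTop_nhds_zero.comp (tendsto_id.const_mul_atTop (by norm_num : (0:ℝ) < 2))
  have h := integral_Ioi_of_hasDerivAt_of_tendsto' (a := (0:ℝ)) (m := 0)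
    (f := fun x => Real.exp (-(2 * x))
      * (-(Real.sin (2 * p * x) + p * Real.cos (2 * p * x)) / (2 * (1 + p ^ 2))))
    (f' := fun x => Real.exp (-(2 * x)) * Real.sin (2 * p * x)) ?_ (exp_sin_int p) ?_
  · rw [h]; simp; ring
  · intro x _
    have a1 : HasDerivAt (fun x : ℝ => -(2 * x)) (-2) x := by
      simpa using! ((hasDerivAt_id x).const_mul (2:ℝ)).neg
    have a2 : HasDerivAt (fun x : ℝ => 2 * p * x) (2 * p) x := by
      simpa using! ((hasDerivAt_id x).const_mul (2 * p))
    have := a1.exp.mul (((a2.sin.add (a2.cos.const_mul p)).neg).div_const (2 * (1 + p ^ 2)))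
    refine this.congr_deriv ?_
    simp only [Pi.neg_apply, Pi.add_apply]
    field_simp
    ring
  · refine hlim.zero_mul_isBoundedUnder_le ?_
    refine isBoundedUnder_of ⟨(1 + |p|) / (2 * (1 + p ^ 2)), fun x => ?_⟩
    simp only [Function.comp_apply]
    rw [norm_div, norm_neg, Real.norm_of_nonneg (by positivity : 0 ≤ 2 * (1 + p ^ 2))]
    gcongr
    refine (norm_add_le _ _).trans ?_
    rw [norm_mul]
    simp only [Real.norm_eq_abs]
    have h1 := Real.abs_sin_le_one (2 * p * x)
    have h2 := Real.abs_cos_le_one (2 * p * x)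
    nlinarith [abs_nonneg p]

lemma base_half (r s : ℝ) (hr : 0 < r) (hs : 0 < s) :
    Phi (-1/2) r 1 s = 2 ^ (2 * (-1/2 : ℝ)) / √π * EE (-1/2 + 1/2) r 1 (s + 1 - r) := by
  obtain ⟨a, ha, rfl⟩ : ∃ a : ℝ, 0 < a ∧ a ^ 2 = s := ⟨√s, by positivity, Real.sq_sqrt hs.le⟩
  obtain ⟨b, hb, rfl⟩ : ∃ b : ℝ, 0 < b ∧ b ^ 2 = r := ⟨√r, by positivity, Real.sq_sqrt hr.le⟩
  have hpi : (0:ℝ) < √π := by positivity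
  rw [show (-1/2 + 1/2 : ℝ) = 0 by norm_num, EE_one]
  unfold Phi
  rw [← integral_comp_rpow_Ioi_of_pos (p := 2) (by norm_num)]
  have e : ∀ x ∈ Ioi (0:ℝ), ((2:ℝ) * x ^ ((2:ℝ) - 1)) • (hK (-1/2) (x ^ (2:ℝ))
      * (x ^ (2:ℝ)) ^ ((-1/2 : ℝ) + (1:ℕ))
      * (gB (-1/2 + (1:ℕ)) (a ^ 2 * x ^ (2:ℝ)) * gB (-1/2) (b ^ 2 * x ^ (2:ℝ))))
      = (1 / (a * √π)) * (Real.exp (-(2 * x)) * Real.sin (2 * (a + b) * x)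
        + Real.exp (-(2 * x)) * Real.sin (2 * (a - b) * x)) := by
    intro x hx
    have hx0 : (0:ℝ) < x := hx
    rw [show ((2:ℝ) - 1) = 1 by norm_num, Real.rpow_one, Real.rpow_two]
    have hx2 : 0 < x ^ 2 := by positivity
    rw [show (-1/2 : ℝ) + (1:ℕ) = 1/2 by norm_num, show (-1/2 : ℝ) = -(1/2) by norm_num,
      hK_neg _ _ hx2, hK_half _ hx2, ← mul_pow, ← mul_pow, gB_half _ (by positivity),
      show (-(1/2) : ℝ) = -1/2 by norm_num, gB_neg_half _ (by positivity),
      Real.sqrt_sq hx0.le, Real.sqrt_sq (by positivity), Real.sqrt_sq (by positivity),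
      show (-1/2 : ℝ) = -(1/2) by norm_num, Real.rpow_neg hx2.le, ← Real.sqrt_eq_rpow,
      Real.sqrt_sq hx0.le, smul_eq_mul,
      show 2 * (a + b) * x = 2 * (a * x) + 2 * (b * x) by ring,
      show 2 * (a - b) * x = 2 * (a * x) - 2 * (b * x) by ring, Real.sin_add, Real.sin_sub]
    field_simp
    ring
  rw [setIntegral_congr_fun measurableSet_Ioi e, integral_const_mul,
    integral_add (exp_sin_int _) (exp_sin_int _), exp_sin_val, exp_sin_val,
    show (2:ℝ) * (-1/2) = -1 by norm_num, Real.rpow_neg_one]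
  have h1 : 0 < 1 + (a + b) ^ 2 := by positivity
  have h2 : 0 < 1 + (a - b) ^ 2 := by positivity
  have h3 : 0 < (a ^ 2 + 1 - b ^ 2) ^ 2 + 4 * b ^ 2 := by positivity
  field_simp
  ring

lemma Phi_half (r : ℝ) (hr : 0 < r) (n : ℕ) :
    ∀ s, 0 < s → Phi (-1/2) r (n + 1) s
      = 2 ^ (2 * (-1/2 : ℝ)) / √π * EE (-1/2 + 1/2) r (n + 1) (s + 1 - r) := by
  induction n with
  | zero => intro s hs; exact base_half r s hr hs
  | succ n ih =>
    have hn0 : (0:ℝ) ≤ n := by positivity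
    exact step (-1/2) r _ (n + 1) le_rfl (by push_cast; linarith) hr ih

lemma Phi_val (α r s : ℝ) (n : ℕ) (hα : -1/2 ≤ α) (hn : -1/2 < α ∨ 1 ≤ n) (hr : 0 < r) (hs : 0 < s) :
    Phi α r n s = 2 ^ (2 * α) / √π * EE (α + 1/2) r n (s + 1 - r) := by
  rcases eq_or_lt_of_le hα with h | h
  · have hn1 : 1 ≤ n := hn.resolve_left (by rw [← h]; exact lt_irrefl _)
    obtain ⟨m, rfl⟩ := Nat.exists_eq_add_of_le' hn1
    rw [← h]
    exact Phi_half r hr m s hs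
  · exact Phi_gt α r h hr n s hs


lemma lhs_eq (α a b : ℝ) (n : ℕ) (ha : 0 < a) (hb : 0 < b) :
    ∫ x in Ioi (0:ℝ), besselK α x * besselJ (α + n) (x * a) * besselJ α (x * b) * x ^ (α + n + 1)
      = 2 ^ (α + n) * a ^ (α + n) * b ^ α * Phi α (b ^ 2) n (a ^ 2) := by
  have h := integral_comp_mul_left_Ioi
    (fun x => besselK α x * besselJ (α + n) (x * a) * besselJ α (x * b) * x ^ (α + n + 1))
    0 (show (0:ℝ) < 2 by norm_num)
  rw [mul_zero, smul_eq_mul, eq_inv_mul_iff_mul_eq₀ (by norm_num)] at h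
  rw [← h, ← integral_const_mul]
  unfold Phi
  rw [← integral_comp_rpow_Ioi_of_pos (g := fun z => hK α z * z ^ (α + n)
    * (gB (α + n) (a ^ 2 * z) * gB α (b ^ 2 * z))) (p := 2) (by norm_num), ← integral_const_mul]
  refine setIntegral_congr_fun measurableSet_Ioi fun y hy => ?_
  have hy0 : (0:ℝ) < y := hy
  rw [besselK_eq _ _ (by positivity), besselJ_eq _ _ (by positivity), besselJ_eq _ _ (by positivity),
    show ((2:ℝ) - 1) = 1 by norm_num, Real.rpow_one, Real.rpow_two, smul_eq_mul,
    show (2 * y) ^ 2 / 4 = y ^ 2 by ring, show 2 * y / 2 = y by ring,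
    show (2 * y * a) ^ 2 / 4 = a ^ 2 * y ^ 2 by ring, show (2 * y * b) ^ 2 / 4 = b ^ 2 * y ^ 2 by ring,
    show 2 * y * a / 2 = y * a by ring, show 2 * y * b / 2 = y * b by ring,
    Real.mul_rpow hy0.le ha.le, Real.mul_rpow hy0.le hb.le, Real.mul_rpow (by norm_num) hy0.le,
    sq y, Real.mul_rpow hy0.le hy0.le, Real.rpow_add_one (by norm_num), Real.rpow_add_one hy0.ne',
    Real.rpow_neg hy0.le]
  have : 0 < y ^ α := by positivity
  field_simp

lemma final_eq (α c sθ sφ g : ℝ) (n : ℕ) (hc : 0 < c) (h1 : 0 < sθ) (h2 : 0 < sφ) :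
    2 ^ (α + n) * (sθ / c) ^ (α + n) * (sφ / c) ^ α * (2 ^ (2 * α) / √π * (n.factorial
      * (2 / c) ^ (-(2 * (α + 1/2) + n)) * g))
      = 2 ^ (α - 1) * n.factorial / √π * c * sθ ^ (α + n) * sφ ^ α * g := by
  have e1 : (2 / c) ^ (-(2 * (α + 1/2) + n)) = c ^ (α + n) * c ^ α * c / (2 ^ (α + n) * 2 ^ α * 2) := by
    rw [Real.rpow_neg (by positivity), ← Real.inv_rpow (by positivity), inv_div,
      Real.div_rpow hc.le (by norm_num), show 2 * (α + 1/2) + (n:ℝ) = (α + n) + α + 1 by ring,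
      Real.rpow_add_one hc.ne', Real.rpow_add hc, Real.rpow_add_one (by norm_num),
      Real.rpow_add (by norm_num) (α + n)]
  have e2 : (2:ℝ) ^ (2 * α) = 2 ^ α * 2 ^ α := by
    rw [← Real.rpow_add (by norm_num)]; congr 1; ring
  rw [e1, e2, Real.div_rpow h1.le hc.le, Real.div_rpow h2.le hc.le, Real.rpow_sub_one (by norm_num)]
  have a1 : 0 < c ^ (α + n) := by positivity
  have a2 : 0 < c ^ α := by positivity
  have a3 : (0:ℝ) < 2 ^ (α + n) := by positivity
  have a4 : (0:ℝ) < 2 ^ α := by positivity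
  field_simp

/-- **Bottom layer (`j = 0`).** Integral formula for the `K`-Bessel function against two
`J`-Bessel functions. -/
theorem bottom_layer (μ ν : ℤ) (hcond : IntCond μ ν)
    (ϑ φ : ℝ) (hϑ : ϑ ∈ Set.Ioo (0 : ℝ) Real.pi) (hφ : φ ∈ Set.Ioo (0 : ℝ) Real.pi)
    (hpos : Real.cos ϑ + Real.cos φ > 0) :
    ∫ x in Set.Ioi (0 : ℝ),
        besselK ((ν : ℝ) / 2) x
          * besselJ ((μ : ℝ) / 2) (x * Real.sin ϑ / (Real.cos ϑ + Real.cos φ))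
          * besselJ ((ν : ℝ) / 2) (x * Real.sin φ / (Real.cos ϑ + Real.cos φ))
          * x ^ (((μ : ℝ) + 2) / 2)
      = (2 : ℝ) ^ (((ν : ℝ) - 2) / 2) * Real.Gamma (((μ : ℝ) - ν + 2) / 2) / Real.sqrt Real.pi
          * (Real.cos ϑ + Real.cos φ)
          * Real.sin ϑ ^ ((μ : ℝ) / 2) * Real.sin φ ^ ((ν : ℝ) / 2)
          * gegenbauerCt (((μ - ν) / 2).toNat) (((ν : ℝ) + 1) / 2) (Real.cos φ) := by
  obtain ⟨hν, hμν, heven, hne⟩ := hcond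
  obtain ⟨m, hm⟩ := heven
  obtain ⟨n, rfl⟩ : ∃ n : ℕ, m = n := Int.eq_ofNat_of_zero_le (by lia)
  have hμ : μ = ν + 2 * n := by lia
  have hn1 : ((μ - ν) / 2).toNat = n := by lia
  have hμR : (μ : ℝ) = ν + 2 * n := by rw [hμ]; push_cast; ring
  have hνR : (-1 : ℝ) ≤ ν := by exact_mod_cast hν
  set c : ℝ := Real.cos ϑ + Real.cos φ with hcdef
  have hc : 0 < c := hpos
  have hsϑ : 0 < Real.sin ϑ := Real.sin_pos_of_mem_Ioo hϑ
  have hsφ : 0 < Real.sin φ := Real.sin_pos_of_mem_Ioo hφ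
  have hcase : -1/2 < (ν : ℝ) / 2 ∨ 1 ≤ n := by
    rcases Nat.eq_zero_or_pos n with h0 | h0
    · left
      have : (-1 : ℤ) < ν := by lia
      have : (-1 : ℝ) < ν := by exact_mod_cast this
      linarith
    · right; exact h0
  rw [hn1, hμR, show ((ν:ℝ) + 2 * n) / 2 = ν / 2 + n by ring,
    show ((ν:ℝ) + 2 * n + 2) / 2 = ν / 2 + n + 1 by ring,
    show ((ν:ℝ) + 2 * n - ν + 2) / 2 = n + 1 by ring, Real.Gamma_nat_eq_factorial,
    show ((ν:ℝ) - 2) / 2 = ν / 2 - 1 by ring, show ((ν:ℝ) + 1) / 2 = ν / 2 + 1/2 by ring]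
  simp only [mul_div_assoc]
  rw [lhs_eq _ _ _ _ (by positivity) (by positivity),
    Phi_val _ _ _ _ (by linarith) hcase (by positivity) (by positivity)]
  have hs1 := Real.sin_sq_add_cos_sq ϑ
  have hs2 := Real.sin_sq_add_cos_sq φ
  have hu : (Real.sin ϑ / c) ^ 2 + 1 - (Real.sin φ / c) ^ 2 = 2 * Real.cos φ / c := by
    field_simp
    rw [hcdef]
    linear_combination hs1 - hs2
  rw [hu, EE_gegen _ _ _ _ (2 / c) (by positivity) (by
      field_simp
      linear_combination 4 * hs2),
    show 2 * Real.cos φ / c / (2 / c) = Real.cos φ by field_simp,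
    final_eq _ _ _ _ _ _ hc hsϑ hsφ]
  ring
end

section
/- (Small-x asymptotics of Λ_j^{μ,ν} for ν > 0) Assume the integrality condition on (μ,ν) with ν > 0 and let j ∈ ℕ. Then lim_{x→0+} x^ν Λ_j^{μ,ν}(x) = 2^{ν−1} Γ(ν/2) · Γ(j+(μ−ν+2)/2)/(j! Γ((μ+2)/2) Γ((μ−ν+2)/2)). -/
open MeasureTheory Real Filter Set Metric

/-! ### The reciprocal Gamma function -/

/-- The reciprocal Gamma function. -/
noncomputable def rG (s : ℝ) : ℝ := (Real.Gamma s)⁻¹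

theorem rG_contDiff : ContDiff ℝ ⊤ rG := by
  have h1 : ContDiff ℂ ⊤ fun s : ℂ => (Complex.Gamma s)⁻¹ :=
    Complex.differentiable_one_div_Gamma.contDiff
  have h2 : ContDiff ℝ ⊤ fun s : ℂ => (Complex.Gamma s)⁻¹ := h1.restrict_scalars ℝ
  have h3 : rG = fun s : ℝ => Complex.reCLM ((Complex.Gamma (Complex.ofRealCLM s))⁻¹) := by
    funext s
    simp only [rG, Complex.ofRealCLM_apply, Complex.Gamma_ofReal, Complex.reCLM_apply]
    rw [← Complex.ofReal_inv, Complex.ofReal_re]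
  rw [h3]
  exact Complex.reCLM.contDiff.comp (h2.comp Complex.ofRealCLM.contDiff)

theorem rG_differentiable : Differentiable ℝ rG :=
  rG_contDiff.differentiable (by simp)

theorem rG_deriv_continuous : Continuous (deriv rG) :=
  rG_contDiff.continuous_deriv (by simp)

theorem rG_rec (s : ℝ) : rG s = s * rG (s + 1) := by
  by_cases hs : s = 0
  · subst hs; simp [rG, Real.Gamma_zero]
  · simp only [rG]
    rw [Real.Gamma_add_one hs, mul_inv]
    field_simp

theorem rG_deriv_rec (s : ℝ) : deriv rG s = rG (s + 1) + s * deriv rG (s + 1) := by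
  have h1 : HasDerivAt (fun s => s * rG (s + 1)) (1 * rG (s + 1) + s * deriv rG (s + 1)) s := by
    have := (rG_differentiable (s + 1)).hasDerivAt
    exact (hasDerivAt_id s).mul (this.comp_add_const s 1)
  have h2 : rG = fun s => s * rG (s + 1) := funext rG_rec
  rw [← h2] at h1
  simpa using h1.deriv

theorem rG_neg_nat (n : ℕ) : rG (-(n : ℝ)) = 0 := by
  simp [rG, Real.Gamma_neg_nat_eq_zero]

theorem rG_deriv_neg_nat (n : ℕ) : deriv rG (-(n : ℝ)) = (-1) ^ n * (n.factorial : ℝ) := by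
  induction n with
  | zero => rw [rG_deriv_rec]; simp [rG]
  | succ k ih =>
    rw [rG_deriv_rec]
    have : (-((k + 1 : ℕ) : ℝ) + 1) = -(k : ℝ) := by push_cast; ring
    rw [this, ih, rG_neg_nat, Nat.factorial_succ]
    push_cast; ring

theorem rG_bound (b : ℝ) : ∃ C : ℝ, 0 ≤ C ∧ ∀ (m : ℕ) (s : ℝ), s ∈ Set.Icc (b - 1) (b + 1) →
    |rG (m + s)| ≤ C ∧ |deriv rG (m + s)| ≤ C * (m + 1) := by
  obtain ⟨M, hM⟩ := exists_nat_ge (2 - b)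
  have hK : IsCompact (Set.Icc (b - 1) (b + 1 + M)) := isCompact_Icc
  obtain ⟨C1, hC1⟩ := hK.exists_bound_of_continuousOn rG_contDiff.continuous.continuousOn
  obtain ⟨C2, hC2⟩ := hK.exists_bound_of_continuousOn rG_deriv_continuous.continuousOn
  set C := max (max C1 C2) 0 with hC
  have hC0 : 0 ≤ C := le_max_right _ _
  refine ⟨C, hC0, fun m s hs => ?_⟩
  have hs1 := hs.1
  have hs2 := hs.2
  have base : ∀ m : ℕ, m ≤ M → |rG (m + s)| ≤ C ∧ |deriv rG (m + s)| ≤ C * (m + 1) := by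
    intro m hm
    have hm' : (m : ℝ) ≤ M := by exact_mod_cast hm
    have hm0 : (0 : ℝ) ≤ m := Nat.cast_nonneg m
    have hmem : (m + s) ∈ Set.Icc (b - 1) (b + 1 + M) := ⟨by linarith, by linarith⟩
    have e1 := hC1 _ hmem
    have e2 := hC2 _ hmem
    rw [Real.norm_eq_abs] at e1 e2
    have f1 : C1 ≤ C := (le_max_left _ _).trans (le_max_left _ _)
    have f2 : C2 ≤ C := (le_max_right _ _).trans (le_max_left _ _)
    refine ⟨e1.trans f1, (e2.trans f2).trans ?_⟩
    nlinarith
  rcases le_total m M with hm | hm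
  · exact base m hm
  · induction m, hm using Nat.le_induction with
    | base => exact base M le_rfl
    | succ m hm ih =>
      obtain ⟨ih1, ih2⟩ := ih
      have hm' : (M : ℝ) ≤ m := by exact_mod_cast hm
      have hge : 1 ≤ (m : ℝ) + s := by linarith
      have hpos : 0 < (m : ℝ) + s := by linarith
      have r1 := rG_rec (m + s)
      have r2 := rG_deriv_rec (m + s)
      have e : ((m + 1 : ℕ) : ℝ) + s = m + s + 1 := by push_cast; ring
      rw [e]
      have a1 : |rG (m + s + 1)| ≤ |rG (m + s)| := by
        rw [r1, abs_mul, abs_of_pos hpos]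
        nlinarith [abs_nonneg (rG (m + s + 1))]
      have a2 : |deriv rG (m + s + 1)| ≤ |deriv rG (m + s)| + |rG (m + s + 1)| := by
        have : (m + s) * deriv rG (m + s + 1) = deriv rG (m + s) - rG (m + s + 1) := by linarith
        have h3 : |(m + s) * deriv rG (m + s + 1)| ≤ |deriv rG (m + s)| + |rG (m + s + 1)| := by
          rw [this]; exact abs_sub _ _
        rw [abs_mul, abs_of_pos hpos] at h3
        nlinarith [abs_nonneg (deriv rG (m + s + 1))]
      refine ⟨a1.trans ih1, ?_⟩
      push_cast
      nlinarith

/-! ### The entire series -/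

/-- `P s w = ∑ w^m / (m! Γ(m+s))`. -/
noncomputable def Pser (s w : ℝ) : ℝ := ∑' m : ℕ, rG (m + s) / m.factorial * w ^ m

/-- derivative of `P s w` in `s`. -/
noncomputable def Qser (s w : ℝ) : ℝ := ∑' m : ℕ, deriv rG (m + s) / m.factorial * w ^ m

theorem summable_lin (C r : ℝ) : Summable fun m : ℕ => C * (m + 1) / m.factorial * r ^ m := by
  have h1 : Summable fun m : ℕ => r ^ m / (m.factorial : ℝ) := Real.summable_pow_div_factorial r
  have h2 : Summable fun m : ℕ => (m : ℝ) * (r ^ m / (m.factorial : ℝ)) := by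
    rw [← summable_nat_add_iff 1]
    refine (h1.mul_left r).congr fun m => ?_
    rw [Nat.factorial_succ]
    push_cast
    field_simp
    ring
  refine ((h1.add h2).mul_left C).congr fun m => ?_
  ring

theorem entire_contDiff (c : ℕ → ℝ) (C : ℝ) (hc : ∀ m, |c m| ≤ C * (m + 1) / m.factorial) :
    ContDiff ℝ ⊤ fun w : ℝ => ∑' m : ℕ, c m * w ^ m := by
  have hrad : (FormalMultilinearSeries.ofScalars ℝ c).radius = ⊤ := by
    apply FormalMultilinearSeries.radius_eq_top_of_summable_norm
    intro r
    refine Summable.of_nonneg_of_le (fun m => by positivity) (fun m => ?_) (summable_lin C r)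
    rw [FormalMultilinearSeries.ofScalars_norm, Real.norm_eq_abs]
    exact mul_le_mul_of_nonneg_right (hc m) (by positivity)
  have h := (FormalMultilinearSeries.ofScalars ℝ c).hasFPowerSeriesOnBall (by rw [hrad]; simp)
  have h2 : (FormalMultilinearSeries.ofScalars ℝ c).sum = fun w : ℝ => ∑' m : ℕ, c m * w ^ m := by
    funext w
    have := FormalMultilinearSeries.ofScalars_sum_eq c w
    simpa [FormalMultilinearSeries.ofScalarsSum] using this
  rw [h2, hrad] at h
  have h3 := h.analyticOnNhd
  rw [contDiff_iff_contDiffAt]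
  intro x
  exact (h3 x (by simp)).contDiffAt

theorem Pser_contDiff (s : ℝ) : ContDiff ℝ ⊤ (Pser s) := by
  obtain ⟨C, hC0, hC⟩ := rG_bound s
  refine entire_contDiff _ C fun m => ?_
  rw [abs_div, Nat.abs_cast]
  have := (hC m s ⟨by linarith, by linarith⟩).1
  gcongr
  have hm0 : (0 : ℝ) ≤ m := Nat.cast_nonneg m
  nlinarith

theorem Qser_contDiff (s : ℝ) : ContDiff ℝ ⊤ (Qser s) := by
  obtain ⟨C, hC0, hC⟩ := rG_bound s
  refine entire_contDiff _ C fun m => ?_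
  rw [abs_div, Nat.abs_cast]
  have := (hC m s ⟨by linarith, by linarith⟩).2
  gcongr

theorem Pser_summable (s w : ℝ) : Summable fun m : ℕ => rG (m + s) / m.factorial * w ^ m := by
  obtain ⟨C, hC0, hC⟩ := rG_bound s
  refine Summable.of_norm_bounded (summable_lin C |w|) fun m => ?_
  rw [Real.norm_eq_abs, abs_mul, abs_div, Nat.abs_cast, abs_pow]
  have := (hC m s ⟨by linarith, by linarith⟩).1
  have hm0 : (0 : ℝ) ≤ m := Nat.cast_nonneg m
  gcongr
  nlinarith

theorem Pser_hasDerivAt (s w : ℝ) : HasDerivAt (fun s => Pser s w) (Qser s w) s := by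
  obtain ⟨C, hC0, hC⟩ := rG_bound s
  refine hasDerivAt_tsum_of_isPreconnected (t := Set.Ioo (s - 1) (s + 1))
    (g := fun (m : ℕ) s => rG (m + s) / m.factorial * w ^ m)
    (g' := fun (m : ℕ) s => deriv rG (m + s) / m.factorial * w ^ m)
    (summable_lin C |w|) isOpen_Ioo isPreconnected_Ioo ?_ ?_
    (y₀ := s) (by simp) (Pser_summable s w) (by simp)
  · intro m y _
    have := ((rG_differentiable (m + y)).hasDerivAt.comp_const_add (m : ℝ) y)
    exact (this.div_const _).mul_const _
  · intro m y hy
    rw [Real.norm_eq_abs, abs_mul, abs_div, Nat.abs_cast, abs_pow]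
    have := (hC m y ⟨hy.1.le, hy.2.le⟩).2
    gcongr

theorem Pser_zero (s : ℝ) : Pser s 0 = rG s := by
  unfold Pser
  rw [tsum_eq_single 0]
  · simp
  · intro m hm; simp [hm]

theorem Qser_zero (s : ℝ) : Qser s 0 = deriv rG s := by
  unfold Qser
  rw [tsum_eq_single 0]
  · simp
  · intro m hm; simp [hm]

theorem Pser_neg_nat (n : ℕ) (w : ℝ) : Pser (1 - n) w = w ^ n * Pser (1 + n) w := by
  unfold Pser
  have h := (Pser_summable (1 - n) w).sum_add_tsum_nat_add n
  rw [← h, Finset.sum_eq_zero, zero_add, ← tsum_mul_left]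
  · refine tsum_congr fun m => ?_
    have e1 : (((m + n : ℕ) : ℝ) + (1 - n)) = m + 1 := by push_cast; ring
    have e2 : ((m : ℝ) + (1 + n)) = ((m + n : ℕ) : ℝ) + 1 := by push_cast; ring
    rw [e1, e2, rG, rG, Real.Gamma_nat_eq_factorial, Real.Gamma_nat_eq_factorial, pow_add]
    field_simp
  · intro m hm
    have hm' := Finset.mem_range.1 hm
    have : ((m : ℝ) + (1 - n)) = -((n - 1 - m : ℕ) : ℝ) := by
      rw [Nat.sub_sub, Nat.cast_sub (by omega)]; push_cast; ring
    rw [this, rG_neg_nat]; simp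

theorem besselIt_eq (α x : ℝ) : besselIt α x = Pser (α + 1) ((x / 2) ^ 2) := by
  unfold besselIt Pser
  refine tsum_congr fun m => ?_
  rw [rG, ← pow_mul, add_assoc]
  rw [div_eq_mul_inv, mul_inv]; ring

theorem besselI_eq_s14 (β x : ℝ) (hx : 0 < x) :
    besselI β x = (x / 2) ^ β * Pser (β + 1) ((x / 2) ^ 2) := by
  unfold besselI Pser
  rw [← tsum_mul_left]
  refine tsum_congr fun m => ?_
  rw [Real.rpow_add (by positivity), rG, ← pow_mul, add_assoc]
  have : (x / 2) ^ (2 * (m : ℝ)) = (x / 2) ^ (2 * m) := by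
    rw [← Real.rpow_natCast]; push_cast; rfl
  rw [this, div_eq_mul_inv, mul_inv]; ring

/-! ### The `K`-Bessel function -/

theorem besselI_hasDerivAt (β x : ℝ) (hx : 0 < x) :
    HasDerivAt (fun β => besselI β x)
      ((x / 2) ^ β * Real.log (x / 2) * Pser (β + 1) ((x / 2) ^ 2)
        + (x / 2) ^ β * Qser (β + 1) ((x / 2) ^ 2)) β := by
  have h0 : (fun β => besselI β x) = fun β => (x / 2) ^ β * Pser (β + 1) ((x / 2) ^ 2) :=
    funext fun β => besselI_eq_s14 β x hx
  rw [h0]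
  have h1 : HasDerivAt (fun β : ℝ => (x / 2) ^ β) ((x / 2) ^ β * Real.log (x / 2)) β := by
    exact Real.hasStrictDerivAt_const_rpow (by positivity) β |>.hasDerivAt
  exact h1.mul ((Pser_hasDerivAt (β + 1) ((x / 2) ^ 2)).comp_add_const β 1)

theorem besselK_odd (α x : ℝ) (hx : 0 < x) (hs : Real.sin (α * Real.pi) ≠ 0) :
    besselK α x = Real.pi / 2 * (besselI (-α) x - besselI α x) / Real.sin (α * Real.pi) := by
  unfold besselK
  apply Filter.Tendsto.limUnder_eq
  have hc : ∀ β, ContinuousAt (fun β => besselI β x) β := fun β =>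
    (besselI_hasDerivAt β x hx).continuousAt
  have h1 : ContinuousAt (fun β => besselI (-β) x) α :=
    ContinuousAt.comp (f := fun β : ℝ => -β) (g := fun β => besselI β x) (hc (-α))
      continuous_neg.continuousAt
  have h2 : ContinuousAt (fun β => Real.pi / 2 * (besselI (-β) x - besselI β x)
      / Real.sin (β * Real.pi)) α := by
    refine ContinuousAt.div (continuousAt_const.mul (h1.sub (hc α))) ?_ hs
    fun_prop
  exact h2.tendsto.mono_left nhdsWithin_le_nhds

theorem besselK_nat (n : ℕ) (x : ℝ) (hx : 0 < x) :
    besselK n x = (x / 2) ^ (-(n : ℝ)) * ((-1) ^ (n + 1) / 2) *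
      (Qser (1 - n) ((x / 2) ^ 2) + ((x / 2) ^ 2) ^ n *
        (2 * Real.log (x / 2) * Pser (1 + n) ((x / 2) ^ 2) + Qser (1 + n) ((x / 2) ^ 2))) := by
  unfold besselK
  apply Filter.Tendsto.limUnder_eq
  set y := x / 2 with hy
  have hy0 : 0 < y := by positivity
  set F : ℝ → ℝ := fun β => besselI (-β) x - besselI β x with hF
  have hpow : y ^ (n : ℝ) = y ^ (-(n : ℝ)) * (y ^ 2) ^ n := by
    rw [Real.rpow_neg hy0.le, Real.rpow_natCast, ← pow_mul]
    field_simp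
    ring
  have hF0 : F n = 0 := by
    simp only [hF]
    rw [besselI_eq_s14 _ _ hx, besselI_eq_s14 _ _ hx, ← hy, hpow, add_comm (-(n : ℝ)) 1,
      ← sub_eq_add_neg, Pser_neg_nat, add_comm (n : ℝ) 1]
    ring
  have hFd : HasDerivAt F (-(y ^ (-(n : ℝ)) *
      (Qser (1 - n) (y ^ 2) + (y ^ 2) ^ n *
        (2 * Real.log y * Pser (1 + n) (y ^ 2) + Qser (1 + n) (y ^ 2))))) n := by
    have h1 := besselI_hasDerivAt n x hx
    have h2 := (besselI_hasDerivAt (-n) x hx).scomp (n : ℝ) (hasDerivAt_neg (n : ℝ))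
    have h3 := h2.sub h1
    refine h3.congr_deriv ?_
    rw [← hy, hpow, add_comm (-(n : ℝ)) 1,
      ← sub_eq_add_neg, Pser_neg_nat, add_comm (n : ℝ) 1]
    simp only [smul_eq_mul]
    ring
  have hS : HasDerivAt (fun β : ℝ => Real.sin (β * Real.pi)) ((-1) ^ n * Real.pi) n := by
    have h := ((hasDerivAt_id (n : ℝ)).mul_const Real.pi).sin
    refine h.congr_deriv ?_
    simp [Real.cos_nat_mul_pi]
  have hS0 : Real.sin ((n : ℝ) * Real.pi) = 0 := Real.sin_nat_mul_pi n
  have t1 := hFd.tendsto_slope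
  have t2 := hS.tendsto_slope
  have t3 := (t1.const_mul (Real.pi / 2)).div t2
    (mul_ne_zero (pow_ne_zero _ (by norm_num)) Real.pi_ne_zero)
  have hval : ∀ v : ℝ, Real.pi / 2 * -v / ((-1) ^ n * Real.pi) = (-1) ^ (n + 1) / 2 * v := by
    intro v
    have hp := Real.pi_ne_zero
    rcases neg_one_pow_eq_or ℝ n with h | h
    · rw [pow_succ, h]; field_simp
    · rw [pow_succ, h]; field_simp
  rw [hval] at t3
  have e : ∀ a b c : ℝ, a * b * c = b * (a * c) := fun a b c => by ring
  rw [e]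
  refine t3.congr' ?_
  filter_upwards [self_mem_nhdsWithin] with β hβ
  have hβ' : β - n ≠ 0 := sub_ne_zero.2 hβ
  simp only [slope_def_field, Pi.div_apply]
  rw [hF0, hS0, sub_zero, sub_zero]
  simp only [hF]
  by_cases hs : Real.sin (β * Real.pi) = 0
  · simp [hs]
  · field_simp

theorem besselKt_form (N : ℕ) (hN : 0 < N) : ∃ A B : ℝ → ℝ, ContDiff ℝ ⊤ A ∧ ContDiff ℝ ⊤ B ∧
    A 0 = (2 : ℝ) ^ ((N : ℝ) - 1) * Real.Gamma ((N : ℝ) / 2) ∧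
    ∀ z : ℝ, 0 < z → z ^ N * besselKt ((N : ℝ) / 2) z = A z + z ^ N * Real.log z * B z := by
  have h2pow : (2 : ℝ) ^ ((N : ℝ) - 1) = 2 ^ N / 2 := by
    rw [Real.rpow_sub_one (by norm_num), Real.rpow_natCast]
  have hw : ContDiff ℝ ⊤ fun z : ℝ => (z / 2) ^ 2 := by fun_prop
  rcases Nat.even_or_odd' N with ⟨n, hn | hn⟩
  · have hn1 : 0 < n := by omega
    have hα : (N : ℝ) / 2 = n := by rw [hn]; push_cast; ring
    refine ⟨fun z => 2 ^ N * ((-1) ^ (n + 1) / 2) *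
      (Qser (1 - n) ((z / 2) ^ 2) + ((z / 2) ^ 2) ^ n *
        (-(2 * Real.log 2) * Pser (1 + n) ((z / 2) ^ 2) + Qser (1 + n) ((z / 2) ^ 2))),
      fun z => (-1) ^ (n + 1) * Pser (1 + n) ((z / 2) ^ 2), ?_, ?_, ?_, ?_⟩
    · have h1 := (Qser_contDiff (1 - n)).comp hw
      have h2 := (Qser_contDiff (1 + n)).comp hw
      have h3 := (Pser_contDiff (1 + n)).comp hw
      exact contDiff_const.mul (h1.add ((hw.pow n).mul ((contDiff_const.mul h3).add h2)))
    · exact contDiff_const.mul ((Pser_contDiff (1 + n)).comp hw)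
    · rw [hα, h2pow]
      obtain ⟨k, rfl⟩ : ∃ k, n = k + 1 := ⟨n - 1, by omega⟩
      have e : (1 - ((k + 1 : ℕ) : ℝ)) = -(k : ℝ) := by push_cast; ring
      have e2 : (((k + 1 : ℕ) : ℝ)) = (k : ℝ) + 1 := by push_cast; ring
      simp only [zero_div, ne_eq, OfNat.ofNat_ne_zero, not_false_eq_true, zero_pow,
        Nat.add_eq_zero_iff, one_ne_zero, and_false, zero_mul, add_zero]
      rw [e, Qser_zero, rG_deriv_neg_nat, e2, Real.Gamma_nat_eq_factorial]
      have : ((-1 : ℝ) ^ (k + 1 + 1)) * (-1) ^ k = 1 := by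
        rw [← pow_add]; exact Even.neg_one_pow ⟨k + 1, by ring⟩
      linear_combination (2 ^ N / 2 * (k.factorial : ℝ)) * this
    · intro z hz
      have hz2 : 0 < z / 2 := by positivity
      rw [hα, besselKt, besselK_nat n z hz, Real.log_div hz.ne' (by norm_num)]
      have hp : (z / 2) ^ (-(n : ℝ)) * (z / 2) ^ (-(n : ℝ)) = 2 ^ N / z ^ N := by
        rw [← Real.rpow_add hz2, ← inv_inj, ← Real.rpow_neg hz2.le, inv_div, ← div_pow,
          ← Real.rpow_natCast, hn]
        congr 1
        push_cast; ring
      have hq : ((z / 2) ^ 2) ^ n = z ^ N / 2 ^ N := by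
        rw [← pow_mul, ← hn, div_pow]
      have hzN : z ^ N ≠ 0 := pow_ne_zero _ hz.ne'
      simp only [← mul_assoc]
      rw [mul_assoc (z ^ N), hp, hq]
      field_simp
      ring
  · set α : ℝ := (N : ℝ) / 2 with hα
    have hα2 : α = n + 1 / 2 := by rw [hα, hn]; push_cast; ring
    have hsin : Real.sin (α * Real.pi) ≠ 0 := by
      have : α * Real.pi = Real.pi / 2 + n * Real.pi := by rw [hα2]; ring
      rw [this, Real.sin_add_nat_mul_pi]
      simp
    refine ⟨fun z => 2 ^ N * (Real.pi / 2 / Real.sin (α * Real.pi)) *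
      (Pser (1 - α) ((z / 2) ^ 2) - (z / 2) ^ N * Pser (1 + α) ((z / 2) ^ 2)),
      fun z => 0, ?_, contDiff_const, ?_, ?_⟩
    · have h1 := (Pser_contDiff (1 - α)).comp hw
      have h3 := (Pser_contDiff (1 + α)).comp hw
      have h4 : ContDiff ℝ ⊤ fun z : ℝ => (z / 2) ^ N := by fun_prop
      exact contDiff_const.mul (h1.sub (h4.mul h3))
    · rw [h2pow]
      simp only [zero_div, ne_eq, OfNat.ofNat_ne_zero, not_false_eq_true, zero_pow, hN.ne',
        zero_mul, sub_zero]
      rw [Pser_zero, rG]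
      have h := Real.Gamma_mul_Gamma_one_sub α
      have hG : Real.Gamma (1 - α) ≠ 0 := by
        intro h0
        rw [h0, mul_zero, mul_comm Real.pi] at h
        exact div_ne_zero Real.pi_ne_zero hsin h.symm
      rw [mul_comm Real.pi] at h
      have h' : Real.Gamma α = Real.pi / Real.sin (α * Real.pi) * (Real.Gamma (1 - α))⁻¹ := by
        rw [← h]; field_simp
      rw [h']; ring
    · intro z hz
      have hz2 : 0 < z / 2 := by positivity
      rw [besselKt, besselK_odd α z hz hsin, besselI_eq_s14 _ _ hz, besselI_eq_s14 _ _ hz]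
      have hp : (z / 2) ^ (-α) * (z / 2) ^ (-α) = 2 ^ N / z ^ N := by
        rw [← Real.rpow_add hz2, ← inv_inj, ← Real.rpow_neg hz2.le, inv_div, ← div_pow,
          ← Real.rpow_natCast]
        congr 1
        rw [hα]; ring
      have hq : (z / 2) ^ (-α) * (z / 2) ^ α = 1 := by
        rw [← Real.rpow_add hz2]; simp
      have hzN : z ^ N ≠ 0 := pow_ne_zero _ hz.ne'
      rw [add_comm (-α) 1, ← sub_eq_add_neg, add_comm α 1]
      set p := (z / 2) ^ (-α)
      set q := (z / 2) ^ α
      have h1 : z ^ N * (p * p) = 2 ^ N := by rw [hp]; field_simp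
      have h2 : (2 : ℝ) ^ N * (z / 2) ^ N = z ^ N := by rw [div_pow]; field_simp
      linear_combination (Real.pi / 2 / Real.sin (α * Real.pi)) *
        (Pser (1 - α) ((z / 2) ^ 2) * h1 - z ^ N * Pser (1 + α) ((z / 2) ^ 2) * hq
          + Pser (1 + α) ((z / 2) ^ 2) * h2)

/-! ### Derivatives in `t` depending on the parameter `x` -/

/-- The domain `t < 1`. -/
def domU : Set (ℝ × ℝ) := {p | p.1 < 1}

theorem domU_isOpen : IsOpen domU := isOpen_lt continuous_fst continuous_const

theorem iteratedDeriv_param (S : ℝ × ℝ → ℝ) (hS : ContDiffOn ℝ ⊤ S domU) (j : ℕ) :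
    ∃ T : ℝ × ℝ → ℝ, ContDiffOn ℝ ⊤ T domU ∧
      ∀ t x : ℝ, t < 1 → iteratedDeriv j (fun t => S (t, x)) t = T (t, x) := by
  induction j with
  | zero => exact ⟨S, hS, fun t x _ => by simp⟩
  | succ j ih =>
    obtain ⟨T, hT, hTe⟩ := ih
    refine ⟨fun p => fderiv ℝ T p (1, 0), ?_, ?_⟩
    · exact (hT.fderiv_of_isOpen domU_isOpen (by simp)).clm_apply contDiffOn_const
    · intro t x ht
      rw [iteratedDeriv_succ]
      have hev : iteratedDeriv j (fun t => S (t, x)) =ᶠ[nhds t] fun t => T (t, x) := by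
        filter_upwards [isOpen_Iio.mem_nhds (show t ∈ Set.Iio (1 : ℝ) from ht)] with s hs
        exact hTe s x hs
      rw [hev.deriv_eq]
      have hd : HasFDerivAt T (fderiv ℝ T (t, x)) (t, x) :=
        ((hT.contDiffAt (domU_isOpen.mem_nhds (show (t, x) ∈ domU from ht))).differentiableAt
          (by simp)).hasFDerivAt
      have hc : HasDerivAt (fun t : ℝ => (t, x)) ((1 : ℝ), (0 : ℝ)) t :=
        (hasDerivAt_id t).prodMk (hasDerivAt_const t x)
      exact (hd.comp_hasDerivAt t hc).deriv

theorem iteratedDeriv_param_tendsto (S : ℝ × ℝ → ℝ) (hS : ContDiffOn ℝ ⊤ S domU) (j : ℕ) :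
    Filter.Tendsto (fun x => iteratedDeriv j (fun t => S (t, x)) 0) (nhdsWithin 0 (Set.Ioi 0))
      (nhds (iteratedDeriv j (fun t => S (t, 0)) 0)) := by
  obtain ⟨T, hT, hTe⟩ := iteratedDeriv_param S hS j
  simp only [hTe 0 _ one_pos]
  have hc : ContinuousAt T (0, 0) :=
    (hT.contDiffAt (domU_isOpen.mem_nhds (show ((0 : ℝ), (0 : ℝ)) ∈ domU from one_pos (α := ℝ)))).continuousAt
  have h2 : ContinuousAt (fun x : ℝ => T (0, x)) 0 :=
    ContinuousAt.comp (f := fun x : ℝ => ((0 : ℝ), x)) hc (by fun_prop)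
  exact h2.tendsto.mono_left nhdsWithin_le_nhds

theorem slice_contDiffAt (S : ℝ × ℝ → ℝ) (hS : ContDiffOn ℝ ⊤ S domU) (x : ℝ) (n : ℕ) :
    ContDiffAt ℝ n (fun t => S (t, x)) 0 := by
  have h := hS.contDiffAt (domU_isOpen.mem_nhds (show ((0 : ℝ), x) ∈ domU from one_pos (α := ℝ)))
  have h2 : ContDiffAt ℝ ⊤ (fun t => S (t, x)) 0 :=
    ContDiffAt.comp (f := fun t : ℝ => (t, x)) 0 h (by fun_prop)
  exact h2.of_le le_top

theorem iteratedDeriv_one_sub_rpow (a : ℝ) (ha : 0 < a) (j : ℕ) (t : ℝ) (ht : t < 1) :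
    iteratedDeriv j (fun t : ℝ => (1 - t) ^ (-a)) t
      = Real.Gamma (j + a) / Real.Gamma a * (1 - t) ^ (-a - j) := by
  have hG := (Real.Gamma_pos_of_pos ha).ne'
  induction j generalizing t with
  | zero => simp [hG]
  | succ j ih =>
    rw [iteratedDeriv_succ]
    have hev : iteratedDeriv j (fun t : ℝ => (1 - t) ^ (-a)) =ᶠ[nhds t]
        fun t => Real.Gamma (j + a) / Real.Gamma a * (1 - t) ^ (-a - j) := by
      filter_upwards [isOpen_Iio.mem_nhds (show t ∈ Set.Iio (1 : ℝ) from ht)] with s hs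
      exact ih s hs
    rw [hev.deriv_eq]
    have h1 : HasDerivAt (fun t : ℝ => 1 - t) (-1) t := (hasDerivAt_id t).const_sub 1
    have h2 := (h1.rpow_const (p := -a - j) (Or.inl (by linarith))).const_mul
      (Real.Gamma (j + a) / Real.Gamma a)
    rw [h2.deriv]
    have e1 : ((j + 1 : ℕ) : ℝ) + a = (j + a) + 1 := by push_cast; ring
    have hpos : (0 : ℝ) < j + a := by positivity
    rw [e1, Real.Gamma_add_one hpos.ne']
    have e2 : -a - ((j + 1 : ℕ) : ℝ) = -a - j - 1 := by push_cast; ring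
    rw [e2]
    ring

/-- **Small-`x` asymptotics of `Λ_j^{μ,ν}` for `ν > 0`.** -/
theorem lambda_asymptotics_nu_pos (μ ν : ℤ) (hcond : IntCond μ ν) (hν : 0 < ν) (j : ℕ) :
    Filter.Tendsto (fun x : ℝ => x ^ (ν : ℝ) * LambdaF μ ν j x)
      (nhdsWithin 0 (Set.Ioi 0))
      (nhds ((2 : ℝ) ^ ((ν : ℝ) - 1) * Real.Gamma ((ν : ℝ) / 2)
        * Real.Gamma (j + ((μ : ℝ) - ν + 2) / 2)
        / (j.factorial * Real.Gamma (((μ : ℝ) + 2) / 2)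
            * Real.Gamma (((μ : ℝ) - ν + 2) / 2)))) := by
  obtain ⟨-, hle, -, -⟩ := hcond
  obtain ⟨N, rfl⟩ : ∃ N : ℕ, ν = N := ⟨ν.toNat, by omega⟩
  have hN : 0 < N := by exact_mod_cast hν
  obtain ⟨A, B, hA, hB, hA0, hK⟩ := besselKt_form N hN
  have hle' : (N : ℝ) ≤ μ := by exact_mod_cast hle
  simp only [Int.cast_natCast]
  set a : ℝ := ((μ : ℝ) - N + 2) / 2 with ha
  have ha0 : 0 < a := by rw [ha]; linarith
  set R : ℝ × ℝ → ℝ := fun p =>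
    (1 - p.1) ^ (-a) * Pser ((μ : ℝ) / 2 + 1) ((p.1 * p.2 / (1 - p.1) / 2) ^ 2) with hR
  set S1 : ℝ × ℝ → ℝ := fun p => R p *
    (A (p.2 / (1 - p.1)) - (p.2 / (1 - p.1)) ^ N * Real.log (1 - p.1) * B (p.2 / (1 - p.1)))
    with hS1
  set S2 : ℝ × ℝ → ℝ := fun p => R p * ((1 / (1 - p.1)) ^ N * B (p.2 / (1 - p.1))) with hS2
  have hne : ∀ p ∈ domU, (1 : ℝ) - p.1 ≠ 0 := fun p hp => by
    have : p.1 < 1 := hp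
    linarith
  have c0 : ContDiffOn ℝ ⊤ (fun p : ℝ × ℝ => 1 - p.1) domU := by fun_prop
  have c1 : ContDiffOn ℝ ⊤ (fun p : ℝ × ℝ => p.2 / (1 - p.1)) domU :=
    ContDiffOn.div (by fun_prop) c0 hne
  have c2 : ContDiffOn ℝ ⊤ (fun p : ℝ × ℝ => p.1 * p.2 / (1 - p.1)) domU :=
    ContDiffOn.div (by fun_prop) c0 hne
  have c3 : ContDiffOn ℝ ⊤ R domU := by
    refine (c0.rpow_const_of_ne hne).mul ?_
    exact (Pser_contDiff _).comp_contDiffOn ((c2.div_const 2).pow 2)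
  have c4 : ContDiffOn ℝ ⊤ S1 domU := by
    exact c3.mul ((hA.comp_contDiffOn c1).sub (((c1.pow N).mul (c0.log hne)).mul
      (hB.comp_contDiffOn c1)))
  have c5 : ContDiffOn ℝ ⊤ S2 domU := by
    exact c3.mul (((contDiffOn_const.div c0 hne).pow N).mul (hB.comp_contDiffOn c1))
  have t1 := iteratedDeriv_param_tendsto S1 c4 j
  have t2 := iteratedDeriv_param_tendsto S2 c5 j
  have t3 : Filter.Tendsto (fun x : ℝ => Real.log x * x ^ (N : ℝ)) (nhdsWithin 0 (Set.Ioi 0))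
      (nhds 0) := tendsto_log_mul_rpow_nhdsGT_zero (by exact_mod_cast hN)
  have t4 := (t1.add (t3.mul t2)).div_const (j.factorial : ℝ)
  have hval : iteratedDeriv j (fun t => S1 (t, 0)) 0
      = (2 : ℝ) ^ ((N : ℝ) - 1) * Real.Gamma ((N : ℝ) / 2) * (Real.Gamma (((μ : ℝ) + 2) / 2))⁻¹
        * (Real.Gamma (j + a) / Real.Gamma a) := by
    have e : (fun t => S1 (t, 0)) = fun t : ℝ =>
        ((2 : ℝ) ^ ((N : ℝ) - 1) * Real.Gamma ((N : ℝ) / 2) * (Real.Gamma (((μ : ℝ) + 2) / 2))⁻¹)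
          * (1 - t) ^ (-a) := by
      funext t
      have e1 : (μ : ℝ) / 2 + 1 = (μ + 2) / 2 := by ring
      simp only [hS1, hR, mul_zero, zero_div, ne_eq, OfNat.ofNat_ne_zero, not_false_eq_true,
        zero_pow, hN.ne', zero_mul, sub_zero]
      rw [Pser_zero, hA0, rG, e1]
      ring
    rw [e, iteratedDeriv_const_mul_field, iteratedDeriv_one_sub_rpow a ha0 j 0 one_pos]
    simp
  rw [hval] at t4
  have hlim : ∀ X Y Z W V : ℝ, (X * Y⁻¹ * (Z / W) + 0 * V) / (j.factorial : ℝ)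
      = X * Z / (j.factorial * Y * W) := by
    intro X Y Z W V
    rw [zero_mul, add_zero]
    simp only [div_eq_mul_inv, mul_inv]
    ring
  rw [hlim] at t4
  refine t4.congr' ?_
  filter_upwards [self_mem_nhdsWithin] with x hx
  have hx0 : (0 : ℝ) < x := hx
  unfold LambdaF
  rw [← mul_div_assoc]
  congr 1
  rw [← iteratedDeriv_const_mul_field, ← iteratedDeriv_const_mul_field]
  have hadd := iteratedDeriv_fun_add (n := j) (x := (0 : ℝ)) (slice_contDiffAt S1 c4 x j)
    ((contDiffAt_const (c := Real.log x * x ^ (N : ℝ))).mul (slice_contDiffAt S2 c5 x j))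
  rw [← hadd]
  refine Filter.EventuallyEq.iteratedDeriv_eq j ?_
  filter_upwards [isOpen_Iio.mem_nhds (show (0 : ℝ) ∈ Set.Iio (1 : ℝ) from one_pos (α := ℝ))] with t ht
  have ht1 : 0 < 1 - t := by
    have : t < 1 := ht
    linarith
  have hz : 0 < x / (1 - t) := by positivity
  have hKz := hK _ hz
  rw [Real.log_div hx0.ne' ht1.ne'] at hKz
  simp only [genFun, hS1, hS2, hR, besselIt_eq]
  have hp : (1 - t) ^ (-((μ : ℝ) + N + 2) / 2) = (1 - t) ^ (-a) * (1 / (1 - t)) ^ N := by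
    have : -((μ : ℝ) + N + 2) / 2 = -a - N := by rw [ha]; ring
    rw [this, Real.rpow_sub ht1, Real.rpow_natCast, div_eq_mul_inv, one_div, inv_pow]
  have hxN : x ^ N * (1 / (1 - t)) ^ N = (x / (1 - t)) ^ N := by
    rw [← mul_pow]; congr 1; ring
  rw [hp, Real.rpow_natCast]
  set E := Pser ((μ : ℝ) / 2 + 1) ((t * x / (1 - t) / 2) ^ 2)
  set k := besselKt ((N : ℝ) / 2) (x / (1 - t))
  set z := x / (1 - t)
  linear_combination (-(1 - t) ^ (-a) * E) * hKz + (1 - t) ^ (-a) * E *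
    (Real.log x * B z - k) * hxN
end

section
/- (L²-norm of the K'-fixed vectors ψ_j on S^{p−1} × S^{q−1}) Let p ≥ q ≥ 2 be integers with p + q even and p + q ≥ 6, and set μ = p − 3, ν = q − 3. For j ∈ ℕ, ∫_{S^{p−1}×S^{q−1}} |C̃_j^{(p−2)/2}(v_0) · C̃_{j+(p−q)/2}^{(q−2)/2}(w_{q−1})|² dσ(v) dσ(w) = (π² Γ(j+μ+1) Γ(j+(μ+ν+2)/2))/(j! 2^{μ+ν} (j+(μ+1)/2)² Γ(j+(μ−ν+2)/2)) · vol(S^{p−2}) vol(S^{q−2}), where v_0 denotes the first coordinate of v ∈ S^{p−1} ⊂ ℝ^p, w_{q−1} denotes the last coordinate of w ∈ S^{q−1} ⊂ ℝ^q, dσ denotes the surface (Euclidean) measure on each sphere, and vol(S^{n−1}) is the surface volume of the unit sphere in ℝ^n. -/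
open MeasureTheory Real Filter Set Metric

lemma gauss_moment_even (m : ℕ) :
    ∫ x : ℝ, x ^ (2 * m) * Real.exp (-x ^ 2) = Real.Gamma (m + 1 / 2) := by
  have h := integral_comp_abs (f := fun x : ℝ => x ^ (2 * m) * Real.exp (-x ^ 2))
  simp only [sq_abs, pow_mul] at h
  simp only [pow_mul]
  rw [h]
  have h2 := integral_rpow_mul_exp_neg_rpow (p := 2) (q := 2 * (m : ℝ)) (by norm_num)
    (by have : (0:ℝ) ≤ m := by positivity
        linarith)
  rw [setIntegral_congr_fun (g := fun x : ℝ => x ^ (2 * (m : ℝ)) * Real.exp (-x ^ (2 : ℝ)))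
    measurableSet_Ioi, h2]
  · rw [show (2 * (m : ℝ) + 1) / 2 = m + 1 / 2 by ring]; ring
  · intro x hx
    have hx0 : (0 : ℝ) ≤ x := le_of_lt hx
    simp only [Real.rpow_mul hx0, Real.rpow_natCast, Real.rpow_ofNat]

lemma gauss_moment_odd (m : ℕ) (hm : Odd m) :
    ∫ x : ℝ, x ^ m * Real.exp (-x ^ 2) = 0 := by
  have h := integral_neg_eq_self (fun x : ℝ => x ^ m * Real.exp (-x ^ 2)) volume
  simp only [hm.neg_pow, neg_sq, neg_mul, integral_neg] at h
  linarith

lemma radial_moment (n : ℕ) : 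
    ∫ r in Ioi (0:ℝ), r ^ n * Real.exp (-r ^ 2) = Real.Gamma ((n + 1) / 2) / 2 := by
  have h2 := integral_rpow_mul_exp_neg_rpow (p := 2) (q := (n : ℝ)) (by norm_num)
    (by have : (0:ℝ) ≤ n := by positivity
        linarith)
  rw [setIntegral_congr_fun (g := fun x : ℝ => x ^ ((n : ℝ)) * Real.exp (-x ^ (2 : ℝ)))
    measurableSet_Ioi, h2]
  · ring
  · intro x hx
    simp only [Real.rpow_natCast, Real.rpow_ofNat]

lemma space_moment {n : ℕ} (i : Fin n) (s : ℕ) :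
    ∫ x : EuclideanSpace ℝ (Fin n), x i ^ s * Real.exp (-‖x‖ ^ 2)
      = (∫ x : ℝ, x ^ s * Real.exp (-x ^ 2)) * √π ^ (n - 1) := by
  rw [← (PiLp.volume_preserving_toLp (Fin n)).integral_comp
    (MeasurableEquiv.toLp 2 _).measurableEmbedding]
  have : ∀ x : Fin n → ℝ, (WithLp.toLp 2 x : EuclideanSpace ℝ (Fin n)) i ^ s
      * Real.exp (-‖(WithLp.toLp 2 x : EuclideanSpace ℝ (Fin n))‖ ^ 2)
      = ∏ k, (if k = i then (x k) ^ s else 1) * Real.exp (-(x k) ^ 2) := by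
    intro x
    rw [Finset.prod_mul_distrib, ← Real.exp_sum, EuclideanSpace.real_norm_sq_eq]
    simp
  simp only [this]
  rw [integral_fintype_prod_volume_eq_prod
    (fun k (y : ℝ) => (if k = i then y ^ s else 1) * Real.exp (-y ^ 2))]
  rw [← Finset.mul_prod_erase _ _ (Finset.mem_univ i)]
  congr 1
  · simp
  · rw [Finset.prod_congr rfl (g := fun _ => √π)]
    · simp
    · intro k hk
      have := integral_gaussian 1
      simpa [Finset.ne_of_mem_erase hk] using this

lemma space_polar {n : ℕ} (hn : 0 < n) (i : Fin n) (s : ℕ) :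
    ∫ x : EuclideanSpace ℝ (Fin n), x i ^ s * Real.exp (-‖x‖ ^ 2)
      = (∫ v : sphere (0 : EuclideanSpace ℝ (Fin n)) 1, (v : EuclideanSpace ℝ (Fin n)) i ^ s
          ∂(volume : Measure (EuclideanSpace ℝ (Fin n))).toSphere)
        * (Real.Gamma ((s + n : ℝ) / 2) / 2) := by
  have : Nonempty (Fin n) := ⟨i⟩
  set E := EuclideanSpace ℝ (Fin n)
  have hd : Module.finrank ℝ E = n := by simp [E]
  set f : E → ℝ := fun x => x i ^ s * Real.exp (-‖x‖ ^ 2)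
  calc
    ∫ x, f x = ∫ x : ({(0)}ᶜ : Set E), f x.1 ∂((volume : Measure E).comap (↑)) := by
      rw [integral_subtype_comap (measurableSet_singleton _).compl f,
        restrict_compl_singleton]
    _ = ∫ x : sphere (0 : E) 1 × Ioi (0:ℝ), (x.1.1 i ^ s) * (x.2.1 ^ s * Real.exp (-x.2.1 ^ 2))
          ∂(volume : Measure E).toSphere.prod (.volumeIoiPow (Module.finrank ℝ E - 1)) := by
      rw [← (volume : Measure E).measurePreserving_homeomorphUnitSphereProd.integral_comp
        (Homeomorph.measurableEmbedding _)]
      congr 1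
      ext x
      have hx : ‖x.1‖ ≠ 0 := norm_ne_zero_iff.2 x.2
      simp only [f, homeomorphUnitSphereProd_apply_fst_coe,
        homeomorphUnitSphereProd_apply_snd_coe]
      rw [← mul_assoc, ← mul_pow]
      congr 2
      have e : (‖x.1‖⁻¹ • x.1) i = ‖x.1‖⁻¹ * x.1 i := rfl
      rw [e]
      field_simp
    _ = (∫ v : sphere (0 : E) 1, v.1 i ^ s ∂(volume : Measure E).toSphere)
        * ∫ x : Ioi (0 : ℝ), (x.1 ^ s * Real.exp (-x.1 ^ 2)) ∂.volumeIoiPow (Module.finrank ℝ E - 1) :=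
      integral_prod_mul (fun v : sphere (0 : E) 1 => v.1 i ^ s)
        (fun x : Ioi (0:ℝ) => x.1 ^ s * Real.exp (-x.1 ^ 2))
    _ = _ := by
      congr 1
      simp only [Measure.volumeIoiPow, ENNReal.ofReal]
      rw [integral_withDensity_eq_integral_smul,
        integral_subtype_comap measurableSet_Ioi fun a ↦ Real.toNNReal (a ^ (Module.finrank ℝ E - 1)) • (a ^ s * Real.exp (-a ^ 2)),
        setIntegral_congr_fun (g := fun r : ℝ => r ^ (s + n - 1) * Real.exp (-r ^ 2)) measurableSet_Ioi fun x hx ↦ ?_, radial_moment]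
      · congr 2
        rw [Nat.cast_sub (by omega)]; push_cast; ring
      · simp only
        rw [NNReal.smul_def, Real.coe_toNNReal _ (pow_nonneg hx.out.le _), hd, smul_eq_mul, ← mul_assoc, ← pow_add]
        congr 2; omega
      · exact (measurable_subtype_coe.pow_const _).real_toNNReal

noncomputable def mom (l : ℝ) (s : ℕ) : ℝ :=
  if Even s then Real.Gamma (l + 1 / 2) * Real.Gamma ((s + 1) / 2) / Real.Gamma (s / 2 + l + 1)
  else 0

lemma sphere_vol {n : ℕ} (hn : 0 < n) :
    ((volume : Measure (EuclideanSpace ℝ (Fin n))).toSphere Set.univ).toReal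
      = 2 * √π ^ n / Real.Gamma (n / 2) := by
  have h1 := space_polar hn ⟨0, hn⟩ 0
  rw [space_moment] at h1
  have h2 := gauss_moment_even 0
  simp only [mul_zero, CharP.cast_eq_zero, zero_add, Real.Gamma_one_half_eq] at h2
  rw [h2] at h1
  simp only [pow_zero, integral_const, smul_eq_mul, mul_one, measureReal_def, Nat.cast_zero, zero_add] at h1
  rw [← pow_succ', Nat.sub_add_cancel hn] at h1
  have : Real.Gamma (n / 2 : ℝ) ≠ 0 := (Real.Gamma_pos_of_pos (by positivity)).ne'
  rw [h1]; field_simp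

lemma sphere_moment {n : ℕ} (hn : 2 ≤ n) (i : Fin n) (s : ℕ) :
    (∫ v : sphere (0 : EuclideanSpace ℝ (Fin n)) 1, (v : EuclideanSpace ℝ (Fin n)) i ^ s
          ∂(volume : Measure (EuclideanSpace ℝ (Fin n))).toSphere)
      = ((volume : Measure (EuclideanSpace ℝ (Fin (n - 1)))).toSphere Set.univ).toReal
        * mom (((n : ℝ) - 2) / 2) s := by
  have h1 := space_polar (by omega) i s
  rw [space_moment] at h1
  have hnR : (2:ℝ) ≤ n := by exact_mod_cast hn
  have hg : Real.Gamma ((s + n : ℝ) / 2) ≠ 0 := (Real.Gamma_pos_of_pos (by positivity)).ne'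
  have hg2 : Real.Gamma ((n - 1 : ℝ) / 2) ≠ 0 := (Real.Gamma_pos_of_pos (by linarith)).ne'
  rw [sphere_vol (by omega), mom]
  split_ifs with he
  · obtain ⟨m, rfl⟩ := he
    rw [← two_mul, gauss_moment_even] at h1
    rw [← two_mul]
    rw [Nat.cast_sub (by omega)]
    push_cast at h1 hg ⊢
    rw [show ((n:ℝ) - 2) / 2 + 1 / 2 = (n - 1) / 2 by ring, show (2 * (m:ℝ) + 1) / 2 = m + 1 / 2 by ring,
      show 2 * (m:ℝ) / 2 + ((n:ℝ) - 2) / 2 + 1 = (2 * m + n) / 2 by ring]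
    rw [← two_mul] at hg
    have h3 : ∀ x y G b w : ℝ, G ≠ 0 → b ≠ 0 → x * w = y * (G / 2) →
        y = 2 * w / b * (b * x / G) := by
      intro x y G b w hG hb h
      field_simp
      linarith
    exact h3 _ _ _ _ _ hg hg2 h1
  · rw [gauss_moment_odd s (Nat.not_even_iff_odd.1 he)] at h1
    simp [hg] at h1
    simp [h1]

lemma mom_step (l : ℝ) (hl : 0 ≤ l) (s : ℕ) :
    (s + 1 : ℝ) * mom l s = (s + 2 + 2 * l) * mom l (s + 2) := by
  unfold mom
  have : Even (s + 2) ↔ Even s := by simp [Nat.even_add]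
  simp only [this]
  split_ifs with h
  · push_cast
    have hs : (0:ℝ) ≤ s := by positivity
    rw [show ((s:ℝ) + 2 + 1) / 2 = (s + 1) / 2 + 1 by ring,
      show ((s:ℝ) + 2) / 2 + l + 1 = (s / 2 + l + 1) + 1 by ring,
      Real.Gamma_add_one (s := ((s:ℝ) + 1) / 2) (by positivity),
      Real.Gamma_add_one (s := (s:ℝ) / 2 + l + 1) (by positivity)]
    have : Real.Gamma ((s:ℝ) / 2 + l + 1) ≠ 0 := (Real.Gamma_pos_of_pos (by positivity)).ne'
    have : (s:ℝ) / 2 + l + 1 ≠ 0 := by positivity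
    field_simp
    ring
  · simp

lemma mom_shift (l : ℝ) (hl : 0 ≤ l) (s : ℕ) :
    mom l s - mom l (s + 2) = mom (l + 1) s := by
  unfold mom
  have : Even (s + 2) ↔ Even s := by simp [Nat.even_add]
  simp only [this]
  split_ifs with h
  · push_cast
    have hs : (0:ℝ) ≤ s := by positivity
    rw [show ((s:ℝ) + 2 + 1) / 2 = (s + 1) / 2 + 1 by ring,
      show ((s:ℝ) + 2) / 2 + l + 1 = (s / 2 + l + 1) + 1 by ring,
      show (s:ℝ) / 2 + (l + 1) + 1 = (s / 2 + l + 1) + 1 by ring,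
      show l + 1 + 1 / 2 = (l + 1 / 2) + 1 by ring,
      Real.Gamma_add_one (s := ((s:ℝ) + 1) / 2) (by positivity),
      Real.Gamma_add_one (s := (s:ℝ) / 2 + l + 1) (by positivity),
      Real.Gamma_add_one (s := l + 1 / 2) (by positivity)]
    have : Real.Gamma ((s:ℝ) / 2 + l + 1) ≠ 0 := (Real.Gamma_pos_of_pos (by positivity)).ne'
    have : (s:ℝ) / 2 + l + 1 ≠ 0 := by positivity
    field_simp
    ring
  · simp

open Polynomial in
/-- The moment functional of the Gegenbauer weight. -/
noncomputable def momL (l : ℝ) : ℝ[X] →ₗ[ℝ] ℝ :=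
  Polynomial.lsum (fun s => (mom l s) • LinearMap.id)

open Polynomial in
lemma momL_monomial (l c : ℝ) (s : ℕ) : momL l (monomial s c) = c * mom l s := by
  simp [momL, mul_comm]

open Polynomial in
lemma momL_shift (l : ℝ) (hl : 0 ≤ l) (f : ℝ[X]) :
    momL l ((1 - X ^ 2) * f) = momL (l + 1) f := by
  induction f using Polynomial.induction_on' with
  | add p q hp hq => rw [mul_add, map_add, map_add, hp, hq]
  | monomial s c =>
    rw [show (1 - X ^ 2) * monomial s c = monomial s c - monomial (s + 2) c by
      rw [sub_mul, one_mul, X_pow_mul_monomial], map_sub, momL_monomial, momL_monomial,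
      momL_monomial, ← mom_shift l hl]
    ring

lemma mom_one (l : ℝ) : mom l 1 = 0 := by simp [mom]

open Polynomial in
lemma momL_ibp (l : ℝ) (hl : 0 ≤ l) (f : ℝ[X]) :
    momL l ((1 - X ^ 2) * derivative f - C (2 * l + 1) * (X * f)) = 0 := by
  induction f using Polynomial.induction_on' with
  | add p q hp hq =>
    rw [map_add, mul_add, mul_add, mul_add, add_sub_add_comm, map_add, hp, hq, add_zero]
  | monomial s c =>
    rw [derivative_monomial, sub_mul, one_mul, X_pow_mul_monomial, X_mul_monomial, C_mul_monomial,
      map_sub, map_sub, momL_monomial, momL_monomial, momL_monomial]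
    cases s with
    | zero => simp [mom_one]
    | succ s =>
      have h := mom_step l hl s
      simp only [Nat.add_sub_cancel]
      push_cast
      linear_combination c * h

/-- Coefficients of the normalized Gegenbauer polynomial. -/
noncomputable def gco (n : ℕ) (l : ℝ) (k : ℕ) : ℝ :=
  (-1) ^ k * Real.Gamma (l + n - k) / (k.factorial * (n - 2 * k).factorial) * 2 ^ (n - 2 * k)

open Polynomial in
/-- The normalized Gegenbauer polynomial. -/
noncomputable def gpoly (n : ℕ) (l : ℝ) : ℝ[X] :=
  ∑ k ∈ Finset.range (n / 2 + 1), monomial (n - 2 * k) (gco n l k)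

lemma gpoly_eval (n : ℕ) (l x : ℝ) : (gpoly n l).eval x = gegenbauerCt n l x := by
  simp only [gpoly, gegenbauerCt, Polynomial.eval_finsetSum, Polynomial.eval_monomial, gco, mul_pow]
  exact Finset.sum_congr rfl fun k _ => by ring

open Polynomial in
lemma gpoly_deriv (n : ℕ) (l : ℝ) :
    derivative (gpoly (n + 1) l) = C 2 * gpoly n (l + 1) := by
  simp only [gpoly, derivative_sum, derivative_monomial, Finset.mul_sum, C_mul_monomial]
  have key : ∀ k, 2 * k ≤ n → monomial (n + 1 - 2 * k - 1) (gco (n + 1) l k * ((n + 1 - 2 * k : ℕ) : ℝ))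
      = monomial (n - 2 * k) (2 * gco n (l + 1) k) := by
    intro k hk
    have e : n + 1 - 2 * k = (n - 2 * k) + 1 := by omega
    rw [e, Nat.add_sub_cancel]
    congr 1
    unfold gco
    rw [e, Nat.factorial_succ, pow_succ]
    push_cast
    rw [show l + (n + 1) - (k : ℝ) = l + 1 + n - k by ring]
    have : ((n - 2 * k : ℕ) : ℝ) + 1 ≠ 0 := by positivity
    field_simp
  rcases Nat.even_or_odd n with h | h
  · have : (n + 1) / 2 = n / 2 := by obtain ⟨m, rfl⟩ := h; omega
    rw [this]
    refine Finset.sum_congr rfl fun k hk => key k ?_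
    have := Finset.mem_range.1 hk
    omega
  · have : (n + 1) / 2 = n / 2 + 1 := by obtain ⟨m, rfl⟩ := h; omega
    rw [this, Finset.sum_range_succ]
    have h0 : n + 1 - 2 * (n / 2 + 1) = 0 := by obtain ⟨m, rfl⟩ := h; omega
    rw [h0]
    simp only [Nat.cast_zero, mul_zero, map_zero, add_zero]
    refine Finset.sum_congr rfl fun k hk => key k ?_
    have := Finset.mem_range.1 hk
    omega

open Polynomial in
lemma gpoly_ode (n : ℕ) (hn : 1 ≤ n) (l : ℝ) (hl : 0 ≤ l) :
    (1 - X ^ 2) * derivative (derivative (gpoly n l)) - C (2 * l + 1) * (X * derivative (gpoly n l))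
      + C (n * (n + 2 * l)) * gpoly n l = 0 := by
  set b : ℕ → ℝ[X] := fun k => monomial (n - 2 * k) (4 * k * (n - k + l) * gco n l k)
  set d : ℕ → ℝ[X] := fun k => derivative (derivative (monomial (n - 2 * k) (gco n l k)))
  have hXX : ∀ m : ℕ, ∀ c : ℝ, X * derivative (monomial m c) = monomial m (m * c) := by
    intro m c
    rw [derivative_monomial, X_mul_monomial]
    cases m with
    | zero => simp
    | succ m => simp [mul_comm]
  have hXX2 : ∀ m : ℕ, ∀ c : ℝ, X ^ 2 * derivative (derivative (monomial m c))
      = monomial m (m * (m - 1) * c) := by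
    intro m c
    rw [derivative_monomial, derivative_monomial, X_pow_mul_monomial]
    rcases m with _ | _ | m
    · simp
    · simp
    · simp only [Nat.add_sub_cancel]
      push_cast
      congr 1
      ring
  have h1 : ∀ k ∈ Finset.range (n / 2 + 1),
      (1 - X ^ 2) * derivative (derivative (monomial (n - 2 * k) (gco n l k)))
      - C (2 * l + 1) * (X * derivative (monomial (n - 2 * k) (gco n l k)))
      + C (n * (n + 2 * l)) * (monomial (n - 2 * k) (gco n l k)) = d k + b k := by
    intro k hk
    have hkn : 2 * k ≤ n := by have := Finset.mem_range.1 hk; omega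
    rw [sub_mul, one_mul, hXX, hXX2, C_mul_monomial, C_mul_monomial]
    simp only [d, b]
    rw [sub_sub, ← map_add, sub_add, ← map_sub, sub_eq_add_neg, ← map_neg]
    congr 2
    rw [Nat.cast_sub hkn]
    push_cast
    ring
  have h2 : ∀ k ∈ Finset.range (n / 2), d k = - b (k + 1) := by
    intro k hk
    have hkn : 2 * k + 2 ≤ n := by have := Finset.mem_range.1 hk; omega
    obtain ⟨m, rfl⟩ := Nat.exists_eq_add_of_le hkn
    simp only [d, b, derivative_monomial, ← map_neg]
    have e1 : 2 * k + 2 + m - 2 * k = m + 2 := by omega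
    have e2 : 2 * k + 2 + m - 2 * (k + 1) = m := by omega
    unfold gco
    rw [e1, e2]
    congr 1
    rw [show l + ((2 * k + 2 + m : ℕ) : ℝ) - k = (l + k + m + 1) + 1 by push_cast; ring,
      Real.Gamma_add_one (by positivity),
      show l + ((2 * k + 2 + m : ℕ) : ℝ) - ((k + 1 : ℕ) : ℝ) = (l + k + m + 1) by push_cast; ring,
      Nat.factorial_succ, Nat.factorial_succ, Nat.factorial_succ]
    push_cast
    have : (m:ℝ) + 1 ≠ 0 := by positivity
    have : (m:ℝ) + 1 + 1 ≠ 0 := by positivity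
    have : (k:ℝ) + 1 ≠ 0 := by positivity
    field_simp
    ring
  have h3 : d (n / 2) = 0 := by
    have : n - 2 * (n / 2) = 0 ∨ n - 2 * (n / 2) = 1 := by omega
    simp only [d, derivative_monomial]
    rcases this with h | h <;> simp [h]
  have h4 : b 0 = 0 := by simp [b]
  have : (1 - X ^ 2) * derivative (derivative (gpoly n l)) - C (2 * l + 1) * (X * derivative (gpoly n l))
      + C (n * (n + 2 * l)) * gpoly n l = ∑ k ∈ Finset.range (n / 2 + 1), (d k + b k) := by
    rw [← Finset.sum_congr rfl h1]
    simp only [gpoly, derivative_sum, Finset.mul_sum, Finset.sum_add_distrib, Finset.sum_sub_distrib]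
  rw [this, Finset.sum_add_distrib, Finset.sum_range_succ, h3, Finset.sum_range_succ' b, h4,
    Finset.sum_congr rfl h2]
  simp

lemma gpoly_norm_step (n : ℕ) (l : ℝ) (hl : 0 ≤ l) :
    ((n + 1 : ℕ) : ℝ) * ((n + 1 : ℕ) + 2 * l) * momL l (gpoly (n + 1) l ^ 2)
      = 4 * momL (l + 1) (gpoly n (l + 1) ^ 2) := by
  have h1 := gpoly_ode (n + 1) (by omega) l hl
  have h2 := momL_ibp l hl (gpoly (n + 1) l * Polynomial.derivative (gpoly (n + 1) l))
  have h3 := momL_shift l hl (Polynomial.derivative (gpoly (n + 1) l) ^ 2)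
  rw [Polynomial.derivative_mul] at h2
  set P := gpoly (n + 1) l
  set dP := Polynomial.derivative P with hdP
  set ddP := Polynomial.derivative dP
  have h4 : momL l ((1 - Polynomial.X ^ 2) * dP ^ 2)
      = ((n + 1 : ℕ) : ℝ) * ((n + 1 : ℕ) + 2 * l) * momL l (P ^ 2) := by
    rw [← smul_eq_mul (_ * _) (momL l _), ← map_smul, Polynomial.smul_eq_C_mul, ← sub_eq_zero,
      ← map_sub, ← h2]
    congr 1
    linear_combination (- P) * h1
  rw [← h4, h3, hdP, gpoly_deriv, ← smul_eq_mul (4:ℝ), ← map_smul, Polynomial.smul_eq_C_mul]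
  congr 1
  rw [mul_pow, ← map_pow]
  norm_num

lemma gpoly_norm (n : ℕ) : ∀ l : ℝ, 0 ≤ l → 0 < n + l →
    momL l (gpoly n l ^ 2)
      = π * 2 ^ (1 - 2 * l) * Real.Gamma (n + 2 * l) / (n.factorial * (n + l)) := by
  induction n with
  | zero =>
    intro l _ hl
    simp only [Nat.cast_zero, zero_add] at hl ⊢
    have h := Real.Gamma_mul_Gamma_add_half l
    have e : gpoly 0 l ^ 2 = Polynomial.monomial 0 (Real.Gamma l ^ 2) := by
      simp [gpoly, gco, ← Polynomial.C_mul_X_pow_eq_monomial]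
    rw [e, momL_monomial]
    simp only [mom, Even.zero, if_true, Nat.cast_zero, zero_add, zero_div,
      Real.Gamma_add_one hl.ne', Real.Gamma_one_half_eq, Nat.factorial_zero, Nat.cast_one, one_mul]
    have : Real.Gamma l ≠ 0 := (Real.Gamma_pos_of_pos hl).ne'
    have hp : √π * √π = π := Real.mul_self_sqrt Real.pi_pos.le
    have h3 : ∀ G b r g t : ℝ, G ≠ 0 → G * b = g * t * r →
        G ^ 2 * (b * r / (l * G)) = r * r * t * g / l := by
      intro G b r g t hG h
      field_simp
      linear_combination r * h
    rw [h3 _ _ _ _ _ this h, hp]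
  | succ n ih =>
    intro l hl hnl
    have h1 := gpoly_norm_step n l hl
    rw [ih (l + 1) (by positivity) (by positivity)] at h1
    rw [show (1 - 2 * (l + 1)) = (1 - 2 * l) - 2 by ring, Real.rpow_sub (by norm_num),
      show (n:ℝ) + 2 * (l + 1) = (n + 1 + 2 * l) + 1 by ring,
      Real.Gamma_add_one (by positivity)] at h1
    have : (n:ℝ) + 1 + 2 * l ≠ 0 := by positivity
    have : (n:ℝ) + 1 ≠ 0 := by positivity
    have : (n:ℝ) + 1 + l ≠ 0 := by positivity
    rw [Nat.factorial_succ]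
    push_cast at h1 ⊢
    rw [eq_comm, show (n:ℝ) + (l + 1) = n + 1 + l by ring] at h1
    rw [← mul_right_inj' (show ((n:ℝ) + 1) * (n + 1 + 2 * l) ≠ 0 by positivity), ← h1]
    norm_num
    field_simp

open Polynomial in
lemma sphere_poly {n : ℕ} (hn : 2 ≤ n) (i : Fin n) (f : ℝ[X]) :
    (∫ v : sphere (0 : EuclideanSpace ℝ (Fin n)) 1, f.eval ((v : EuclideanSpace ℝ (Fin n)) i)
          ∂(volume : Measure (EuclideanSpace ℝ (Fin n))).toSphere)
      = ((volume : Measure (EuclideanSpace ℝ (Fin (n - 1)))).toSphere Set.univ).toReal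
        * momL (((n : ℝ) - 2) / 2) f := by
  have hint : ∀ f : ℝ[X], Integrable (fun v : sphere (0 : EuclideanSpace ℝ (Fin n)) 1 =>
      f.eval ((v : EuclideanSpace ℝ (Fin n)) i))
      (volume : Measure (EuclideanSpace ℝ (Fin n))).toSphere := by
    intro f
    have hc : Continuous (fun v : sphere (0 : EuclideanSpace ℝ (Fin n)) 1 =>
      f.eval ((v : EuclideanSpace ℝ (Fin n)) i)) := by
      refine f.continuous.comp ?_
      fun_prop
    exact hc.integrable_of_hasCompactSupport (HasCompactSupport.of_compactSpace _)
  induction f using Polynomial.induction_on' with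
  | add p q hp hq =>
    simp only [eval_add]
    rw [integral_add (hint p) (hint q), hp, hq, map_add, mul_add]
  | monomial s c =>
    simp only [eval_monomial]
    rw [integral_const_mul, sphere_moment hn, momL_monomial]
    ring

lemma sphere_gegenbauer {n : ℕ} (hn : 2 ≤ n) (i : Fin n) (m : ℕ) (hm : 2 < n + 2 * m) :
    (∫ v : sphere (0 : EuclideanSpace ℝ (Fin n)) 1,
        gegenbauerCt m (((n : ℝ) - 2) / 2) ((v : EuclideanSpace ℝ (Fin n)) i) ^ 2
          ∂(volume : Measure (EuclideanSpace ℝ (Fin n))).toSphere)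
      = ((volume : Measure (EuclideanSpace ℝ (Fin (n - 1)))).toSphere Set.univ).toReal
        * (π * 2 ^ (3 - (n : ℝ)) * Real.Gamma (m + n - 2)
            / (m.factorial * (m + ((n : ℝ) - 2) / 2))) := by
  have hnR : (2:ℝ) ≤ n := by exact_mod_cast hn
  have hmR : (2:ℝ) < n + 2 * m := by exact_mod_cast hm
  have h := sphere_poly hn i (gpoly m (((n : ℝ) - 2) / 2) ^ 2)
  simp only [Polynomial.eval_pow, gpoly_eval] at h
  rw [h, gpoly_norm m _ (by linarith) (by linarith)]
  rw [show 1 - 2 * (((n:ℝ) - 2) / 2) = 3 - n by ring,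
    show (m:ℝ) + 2 * (((n:ℝ) - 2) / 2) = m + n - 2 by ring]

/-- **`L²`-norm of the `K'`-fixed vectors `ψ_j` on `S^{p−1} × S^{q−1}`.**
Here the spheres carry their surface measure `volume.toSphere`, and
`vol(S^{n−1}) = (volume.toSphere) univ` is the surface volume of the unit sphere in `ℝⁿ`. -/
theorem psi_L2_norm (p q : ℕ) (hq : 2 ≤ q) (hpq : q ≤ p) (heven : Even (p + q))
    (hsum : 6 ≤ p + q) (j : ℕ) :
    ∫ v : Metric.sphere (0 : EuclideanSpace ℝ (Fin p)) 1,
      ∫ w : Metric.sphere (0 : EuclideanSpace ℝ (Fin q)) 1,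
        |gegenbauerCt j (((p : ℝ) - 2) / 2) ((v : EuclideanSpace ℝ (Fin p)) ⟨0, by omega⟩)
          * gegenbauerCt (j + (p - q) / 2) (((q : ℝ) - 2) / 2)
              ((w : EuclideanSpace ℝ (Fin q)) ⟨q - 1, by omega⟩)| ^ 2
        ∂(volume : Measure (EuclideanSpace ℝ (Fin q))).toSphere
      ∂(volume : Measure (EuclideanSpace ℝ (Fin p))).toSphere
    = Real.pi ^ 2 * Real.Gamma (j + ((p : ℝ) - 3) + 1)
        * Real.Gamma (j + (((p : ℝ) - 3) + ((q : ℝ) - 3) + 2) / 2)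
        / (j.factorial * (2 : ℝ) ^ (((p : ℝ) - 3) + ((q : ℝ) - 3))
            * (j + (((p : ℝ) - 3) + 1) / 2) ^ 2
            * Real.Gamma (j + (((p : ℝ) - 3) - ((q : ℝ) - 3) + 2) / 2))
        * ((volume : Measure (EuclideanSpace ℝ (Fin (p - 1)))).toSphere Set.univ).toReal
        * ((volume : Measure (EuclideanSpace ℝ (Fin (q - 1)))).toSphere Set.univ).toReal := by
  have hp : 3 ≤ p := by omega
  obtain ⟨t, ht⟩ : ∃ t, p = q + 2 * t := by
    obtain ⟨r, hr⟩ := heven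
    exact ⟨r - q, by omega⟩
  have htt : (p - q) / 2 = t := by omega
  rw [htt]
  simp only [sq_abs, mul_pow]
  simp only [integral_const_mul, integral_mul_const]
  rw [sphere_gegenbauer (by omega) _ j (by omega),
    sphere_gegenbauer (by omega) _ (j + t) (by omega)]
  have hpt : (p : ℝ) = q + 2 * t := by exact_mod_cast ht
  have hfac : (((j + t).factorial : ℕ) : ℝ) = Real.Gamma (j + (((p : ℝ) - 3) - ((q : ℝ) - 3) + 2) / 2) := by
    rw [← Real.Gamma_nat_eq_factorial, hpt]
    push_cast
    congr 1
    ring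
  have hpow : (2 : ℝ) ^ (((p : ℝ) - 3) + ((q : ℝ) - 3)) = ((2 : ℝ) ^ (3 - (p : ℝ)))⁻¹ * ((2 : ℝ) ^ (3 - (q : ℝ)))⁻¹ := by
    rw [Real.rpow_add (by norm_num), ← Real.rpow_neg (by norm_num), ← Real.rpow_neg (by norm_num)]
    congr 2 <;> ring
  rw [← hfac, hpow]
  rw [show (j : ℝ) + ((p : ℝ) - 3) + 1 = j + p - 2 by ring,
    show ((j + t : ℕ) : ℝ) + q - 2 = j + (((p : ℝ) - 3) + ((q : ℝ) - 3) + 2) / 2 by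
      rw [hpt]; push_cast; ring,
    show ((j + t : ℕ) : ℝ) + ((q : ℝ) - 2) / 2 = j + ((p : ℝ) - 2) / 2 by
      rw [hpt]; push_cast; ring,
    show ((p : ℝ) - 3 + 1) / 2 = ((p : ℝ) - 2) / 2 by ring]
  have h1 : (j : ℝ) + ((p : ℝ) - 2) / 2 ≠ 0 := by
    have : (3 : ℝ) ≤ p := by exact_mod_cast hp
    have : (0 : ℝ) ≤ j := by positivity
    exact (by linarith : (0:ℝ) < (j : ℝ) + ((p : ℝ) - 2) / 2).ne'
  have h2 : (2 : ℝ) ^ (3 - (p : ℝ)) ≠ 0 := (Real.rpow_pos_of_pos (by norm_num) _).ne'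
  have h3 : (2 : ℝ) ^ (3 - (q : ℝ)) ≠ 0 := (Real.rpow_pos_of_pos (by norm_num) _).ne'
  generalize (2 : ℝ) ^ (3 - (p : ℝ)) = A at *
  generalize (2 : ℝ) ^ (3 - (q : ℝ)) = B at *
  generalize (j : ℝ) + ((p : ℝ) - 2) / 2 = D at *
  have h4 : (((j + t).factorial : ℕ) : ℝ) ≠ 0 := by positivity
  have h5 : ((j.factorial : ℕ) : ℝ) ≠ 0 := by positivity
  field_simp
end
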